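/- Let q be a power of 2 and let f ∈ F_q[X]. If H has an absolutely irreducible factor over F_q, then f is not exceptional planar. -/

import Mathlib

open Polynomial

/-- A function on a field of characteristic two is planar if for every nonzero `ε`
the map `x ↦ f (x + ε) + f x + ε * x` is a bijection. -/
def IsPlanarEven {F : Type} [Field F] (f : F → F) : Prop :=
  ∀ ε : F, ε ≠ 0 → Function.Bijective (fun x : F => f (x + ε) + f x + ε * x)

/-- A polynomial over a finite field `K` of characteristic two is exceptional planar
if for infinitely many positive integers `r` it induces a planar function on the
extension of `K` of degree `r`. -/
def IsExceptionalPlanarEven {K : Type} [Field K] [Fintype K] (f : K[X]) : Prop :=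
  Set.Infinite {r : ℕ | 0 < r ∧ ∀ (L : Type) [Field L] [Fintype L] [Algebra K L],
      Fintype.card L = Fintype.card K ^ r →
      IsPlanarEven (fun x : L => Polynomial.aeval x f)}


theorem chain_dep {L ι : Type*} [Field L] [DecidableEq ι] (S : ℕ → Subfield L) (hS : Antitone S)
    (e : ι → L) (s : Finset ι)
    (h : ∀ r, ∃ c : ι → L, (∀ i, c i ∈ S r) ∧ ∑ i ∈ s, c i * e i = 0 ∧ ∃ i ∈ s, c i ≠ 0) :
    ∃ c : ι → L, (∀ i ∈ s, ∀ r, c i ∈ S r) ∧ ∑ i ∈ s, c i * e i = 0 ∧ ∃ i ∈ s, c i ≠ 0 := by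
  induction s using Finset.strongInduction with
  | H s ih =>
    by_cases hsub : ∃ i ∈ s, ∀ r, ∃ c : ι → L, (∀ i, c i ∈ S r) ∧
        ∑ j ∈ s.erase i, c j * e j = 0 ∧ ∃ j ∈ s.erase i, c j ≠ 0
    · obtain ⟨i, his, hi⟩ := hsub
      obtain ⟨c, hc, hc0, j, hj, hcj⟩ := ih _ (Finset.erase_ssubset his) hi
      refine ⟨fun a => if a = i then 0 else c a, ?_, ?_, j, Finset.mem_of_mem_erase hj, ?_⟩
      · intro a ha r
        by_cases hai : a = i
        · simp [hai, (S r).zero_mem]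
        · simp only [hai, if_false]
          exact hc a (Finset.mem_erase.2 ⟨hai, ha⟩) r
      · rw [← Finset.add_sum_erase _ _ his]
        simp only [if_true, zero_mul, zero_add]
        refine Eq.trans (Finset.sum_congr rfl fun a ha => ?_) hc0
        rw [if_neg (Finset.ne_of_mem_erase ha)]
      · simp only [Finset.ne_of_mem_erase hj, if_false]
        exact hcj
    · push Not at hsub
      choose! R hR using hsub
      obtain ⟨-, -, -, i0, hi0, -⟩ := h 0
      set N := R i0 with hN
      have key : ∀ r, N ≤ r → ∃ c : ι → L, (∀ i, c i ∈ S r) ∧ ∑ i ∈ s, c i * e i = 0 ∧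
          c i0 = 1 := by
        intro r hr
        obtain ⟨c, hc, hc0, j, hj, hcj⟩ := h r
        have h0 : c i0 ≠ 0 := by
          intro h0
          have h1 := hR i0 hi0 c (fun i => hS hr (hc i)) (by
            rw [← Finset.add_sum_erase _ _ hi0, h0, zero_mul, zero_add] at hc0
            exact hc0)
          by_cases hji : j = i0
          · exact hcj (hji ▸ h0)
          · exact hcj (h1 j (Finset.mem_erase.2 ⟨hji, hj⟩))
        refine ⟨fun i => c i / c i0, fun i => (S r).div_mem (hc i) (hc i0), ?_, div_self h0⟩
        have : ∑ i ∈ s, c i / c i0 * e i = (∑ i ∈ s, c i * e i) / c i0 := by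
          rw [Finset.sum_div]
          exact Finset.sum_congr rfl fun _ _ => by ring
        rw [this, hc0, zero_div]
      obtain ⟨c, hc, hc0, hc1⟩ := key N le_rfl
      refine ⟨c, ?_, hc0, i0, hi0, by rw [hc1]; exact one_ne_zero⟩
      have big : ∀ r, N ≤ r → ∀ i ∈ s, c i ∈ S r := by
        intro r hr i hi
        obtain ⟨c', hc', hc0', hc1'⟩ := key r hr
        by_cases hii : i = i0
        · rw [hii, hc1]; exact (S r).one_mem
        have := hR i0 hi0 (fun i => c i - c' i)
          (fun i => (S N).sub_mem (hc i) (hS hr (hc' i))) (by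
            have h2 : ∑ i ∈ s, (c i - c' i) * e i = 0 := by
              simp only [sub_mul, Finset.sum_sub_distrib, hc0, hc0', sub_zero]
            rw [← Finset.add_sum_erase _ _ hi0, hc1, hc1', sub_self, zero_mul, zero_add] at h2
            exact h2) i (Finset.mem_erase.2 ⟨hii, hi⟩)
        rw [sub_eq_zero.1 this]
        exact hc' i
      intro i hi r
      rcases le_total N r with hr | hr
      · exact big r hr i hi
      · exact hS hr (big N le_rfl i hi)

/-- The `q^r`-power Frobenius. -/
noncomputable def fr (k R : Type*) [Field k] [Fintype k] [CommRing R] [Algebra k R] (r : ℕ) :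
    R →ₐ[k] R := (FiniteField.frobeniusAlgHom k R) ^ r

theorem fr_apply (k : Type*) {R : Type*} [Field k] [Fintype k] [CommRing R] [Algebra k R] (r : ℕ)
    (x : R) : fr k R r x = x ^ (Fintype.card k ^ r) := by
  rw [fr, AlgHom.coe_pow, FiniteField.coe_frobeniusAlgHom, pow_iterate]

theorem ufd_perfect_part {B K : Type*} [CommRing B] [IsDomain B] [UniqueFactorizationMonoid B]
    [Field K] [Algebra B K] [IsFractionRing B K] (q : ℕ) (hq : 1 < q) (t : K) (ht0 : t ≠ 0)
    (ht : ∀ r : ℕ, ∃ s : K, s ^ (q ^ r) = t) : ∃ u v : Bˣ, t = algebraMap B K u / algebraMap B K v := by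
  obtain ⟨a, b, hab, hmk⟩ := IsFractionRing.exists_reduced_fraction B t
  have hinj := IsFractionRing.injective B K
  have hb0 : (b : B) ≠ 0 := nonZeroDivisors.ne_zero b.2
  have ht' : t * algebraMap B K b = algebraMap B K a := by
    rw [← hmk]; exact IsLocalization.mk'_spec K a b
  have ha0 : a ≠ 0 := by
    rintro rfl
    rw [map_zero, mul_eq_zero] at ht'
    rcases ht' with h | h
    · exact ht0 h
    · exact hb0 (hinj (by rw [h, map_zero]))
  have key : ∀ r : ℕ, ∃ a' b' : B, Associated a (a' ^ (q ^ r)) ∧ Associated (b : B) (b' ^ (q ^ r)) := by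
    intro r
    obtain ⟨s, hs⟩ := ht r
    obtain ⟨a', b', hab', hmk'⟩ := IsFractionRing.exists_reduced_fraction B s
    have hs' : s * algebraMap B K b' = algebraMap B K a' := by
      rw [← hmk']; exact IsLocalization.mk'_spec K a' b'
    have e1 : a * (b' : B) ^ (q ^ r) = b * a' ^ (q ^ r) := by
      apply hinj
      simp only [map_mul, map_pow]
      rw [← ht', ← hs', ← hs]; ring
    have hp : IsRelPrime (a' ^ (q ^ r)) ((b' : B) ^ (q ^ r)) := hab'.pow
    refine ⟨a', b', ?_, ?_⟩
    · apply associated_of_dvd_dvd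
      · exact hab.dvd_of_dvd_mul_left (Dvd.intro _ e1)
      · exact hp.dvd_of_dvd_mul_right (Dvd.intro_left _ e1.symm)
    · apply associated_of_dvd_dvd
      · exact hab.symm.dvd_of_dvd_mul_left (Dvd.intro _ e1.symm)
      · exact hp.symm.dvd_of_dvd_mul_right (Dvd.intro_left _ e1)
  have unit : ∀ a : B, a ≠ 0 → (∀ r : ℕ, ∃ a' : B, Associated a (a' ^ (q ^ r))) → IsUnit a := by
    intro a ha h
    by_contra hu
    obtain ⟨p, hp, hpa⟩ := WfDvdMonoid.exists_irreducible_factor hu ha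
    obtain ⟨n, hn⟩ := FiniteMultiplicity.of_not_isUnit hp.not_isUnit ha
    obtain ⟨a', ha'⟩ := h (n + 1)
    have h1 : p ∣ a' := (UniqueFactorizationMonoid.irreducible_iff_prime.1 hp).dvd_of_dvd_pow
      (hpa.trans ha'.dvd)
    apply hn
    calc p ^ (n+1) ∣ p ^ (q ^ (n+1)) := pow_dvd_pow _ (Nat.lt_pow_self hq).le
      _ ∣ a' ^ (q ^ (n+1)) := pow_dvd_pow_of_dvd h1 _
      _ ∣ a := ha'.symm.dvd
  obtain ⟨u, hu⟩ := unit a ha0 fun r => (key r).imp fun a' h => h.choose_spec.1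
  obtain ⟨v, hv⟩ := unit b hb0 fun r => let ⟨_, b', h⟩ := key r; ⟨b', h.2⟩
  refine ⟨u, v, ?_⟩
  rw [hu, hv, ← ht', mul_div_cancel_right₀]
  intro h
  exact hb0 (hinj (by rw [h, map_zero]))

/-- Nonvanishing of Frobenius-twisted combinations. -/
theorem frob_nonvanish {k K L : Type*} [Field k] [Fintype k] [Field K] [Field L]
    [Algebra k K] [Algebra k L] [Algebra K L] [IsScalarTower k K L] [FiniteDimensional K L]
    (hK : ∀ t : K, (∀ r : ℕ, ∃ s : K, s ^ (Fintype.card k ^ r) = t) → t ∈ (algebraMap k K).range)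
    (hL : ∀ t : L, IsAlgebraic k t → t ∈ (algebraMap k L).range)
    {ι : Type*} [Fintype ι] (h s : ι → L) (hh : h ≠ 0) (hs : LinearIndependent k s) :
    ∃ r0, ∀ r ≥ r0, ∑ i, h i * s i ^ (Fintype.card k ^ r) ≠ 0 := by
  classical
  set q := Fintype.card k with hq
  -- elements with all roots are constants
  have perf : ∀ t : L, (∀ r : ℕ, ∃ s : L, s ^ (q ^ r) = t) → t ∈ (algebraMap k L).range := by
    intro t ht
    apply hL
    let S : ℕ → Subfield L := fun r => ((algebraMap K L).comp (fr k K r).toRingHom).fieldRange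
    have hSa : Antitone S := by
      intro a b hab x hx
      obtain ⟨y, rfl⟩ := hx
      refine ⟨y ^ (q ^ (b - a)), ?_⟩
      simp only [RingHom.comp_apply, AlgHom.toRingHom_eq_coe, RingHom.coe_coe, fr_apply]
      rw [← pow_mul, ← pow_add, Nat.sub_add_cancel hab]
    obtain ⟨c, hc, hc0, i, hi, hci⟩ := chain_dep S hSa (fun i : ℕ => t ^ i)
      (Finset.range (Module.finrank K L + 1)) (by
        intro r
        obtain ⟨s, hs⟩ := ht r
        have hint : IsIntegral K s := IsIntegral.of_finite K s
        let g := minpoly K s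
        have hdeg : g.natDegree < Module.finrank K L + 1 :=
          Nat.lt_succ_of_le (minpoly.natDegree_le s)
        refine ⟨fun i => algebraMap K L (fr k K r (g.coeff i)), fun i => ⟨_, rfl⟩, ?_, ?_⟩
        · have h0 : aeval s g = 0 := minpoly.aeval K s
          rw [aeval_eq_sum_range' hdeg] at h0
          have := congrArg (fr k L r) h0
          rw [map_zero, map_sum] at this
          rw [← this]
          refine Finset.sum_congr rfl fun i _ => ?_
          rw [Algebra.smul_def, map_mul]
          simp only [fr_apply]
          rw [← hs, map_pow]
          ring
        · refine ⟨g.natDegree, Finset.mem_range.2 hdeg, ?_⟩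
          dsimp only
          rw [show g.coeff g.natDegree = 1 from (minpoly.monic hint), map_one, map_one]
          exact one_ne_zero)
    have hck : ∀ i ∈ Finset.range (Module.finrank K L + 1), ∃ d : k, algebraMap k L d = c i := by
      intro i hi
      have h0 := hc i hi 0
      obtain ⟨y, hy⟩ := h0
      have hy' : algebraMap K L y = c i := by
        rw [← hy]
        simp [fr_apply]
      obtain ⟨d, hd⟩ := hK y (by
        intro r
        obtain ⟨z, hz⟩ := hc i hi r
        refine ⟨z, (algebraMap K L).injective ?_⟩
        rw [hy', ← hz]
        simp [fr_apply, hq])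
      exact ⟨d, by rw [← hy', ← hd, ← IsScalarTower.algebraMap_apply]⟩
    choose! d hd using hck
    refine ⟨∑ i ∈ Finset.range (Module.finrank K L + 1), monomial i (d i), ?_, ?_⟩
    · intro h0
      have := congrArg (fun p => p.coeff i) h0
      simp only [finsetSum_coeff, coeff_monomial, coeff_zero] at this
      rw [Finset.sum_ite_eq' , if_pos hi] at this
      apply hci
      rw [← hd i hi, this, map_zero]
    · rw [map_sum, ← hc0]
      refine Finset.sum_congr rfl fun i hi => ?_
      rw [aeval_monomial, hd i hi]
  by_contra hcon
  push Not at hcon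
  let S : ℕ → Subfield L := fun r => ((fr k L r).toRingHom).fieldRange
  have hSa : Antitone S := by
    intro a b hab x hx
    obtain ⟨y, rfl⟩ := hx
    refine ⟨y ^ (q ^ (b - a)), ?_⟩
    simp only [AlgHom.toRingHom_eq_coe, RingHom.coe_coe, fr_apply]
    rw [← pow_mul, ← pow_add, Nat.sub_add_cancel hab]
  let V := Submodule.span k (Set.range h)
  have : FiniteDimensional k V := FiniteDimensional.span_of_finite k (Set.finite_range h)
  let b := Module.finBasis k V
  let hV : ι → V := fun i => ⟨h i, Submodule.subset_span ⟨i, rfl⟩⟩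
  have hexp : ∀ i, h i = ∑ j, algebraMap k L (b.repr (hV i) j) * (b j : L) := by
    intro i
    have := congrArg (Subtype.val) (b.sum_repr (hV i))
    rw [Submodule.coe_sum] at this
    rw [show h i = (hV i : L) from rfl, ← this]
    refine Finset.sum_congr rfl fun j _ => ?_
    rw [Submodule.coe_smul, Algebra.smul_def]
  let T : Fin (Module.finrank k V) → L := fun j => ∑ i, algebraMap k L (b.repr (hV i) j) * s i
  have hT : ∃ j, T j ≠ 0 := by
    by_contra hT
    push Not at hT
    apply hh
    funext i
    rw [hexp i]
    apply Finset.sum_eq_zero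
    intro j _
    have := Fintype.linearIndependent_iff.1 hs (fun i => b.repr (hV i) j) (by
      rw [← hT j]
      exact Finset.sum_congr rfl fun i _ => Algebra.smul_def _ _) i
    rw [this, map_zero, zero_mul]
  obtain ⟨j0, hj0⟩ := hT
  obtain ⟨c, hc, hc0, i, hi, hci⟩ := chain_dep S hSa (fun j => (b j : L)) Finset.univ (by
    intro r
    obtain ⟨r', hr', hsum⟩ := hcon r
    refine ⟨fun j => fr k L r' (T j), fun j => hSa hr' ⟨T j, rfl⟩, ?_, j0, Finset.mem_univ _, ?_⟩
    · rw [← hsum]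
      simp only [T, map_sum, map_mul, AlgHom.commutes, Finset.sum_mul]
      rw [Finset.sum_comm]
      refine Finset.sum_congr rfl fun i _ => ?_
      conv_rhs => rw [hexp i]
      rw [Finset.sum_mul]
      refine Finset.sum_congr rfl fun j _ => ?_
      rw [fr_apply]; ring
    · dsimp only
      rw [fr_apply]; exact pow_ne_zero _ hj0)
  have hck : ∀ j, ∃ d : k, algebraMap k L d = c j := by
    intro j
    exact perf (c j) (by
      intro r
      obtain ⟨z, hz⟩ := hc j (Finset.mem_univ _) r
      exact ⟨z, by rw [← hz]; simp [fr_apply, hq]⟩)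
  choose d hd using hck
  have hli : LinearIndependent k (fun j => (b j : L)) :=
    b.linearIndependent.map' V.subtype (Submodule.ker_subtype V)
  have := Fintype.linearIndependent_iff.1 hli d (by
    rw [← hc0]
    refine Finset.sum_congr rfl fun j _ => ?_
    rw [Algebra.smul_def, hd]) i
  exact hci (by rw [← hd, this, map_zero])

theorem rank_null {A V W : Type*} [CommRing A] [IsDomain A] [IsNoetherianRing A]
    [AddCommGroup V] [Module A V] [Module.Finite A V] [AddCommGroup W] [Module A W]
    (g : V →ₗ[A] W) : Module.finrank A (LinearMap.range g) + Module.finrank A (LinearMap.ker g) =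
      Module.finrank A V := by
  rw [← g.quotKerEquivRange.finrank_eq]
  exact (LinearMap.ker g).finrank_quotient_add_finrank

theorem finrank_le_of_nilp {A V : Type*} [CommRing A] [IsDomain A] [IsNoetherianRing A]
    [AddCommGroup V] [Module A V] [Module.Finite A V] (g : V →ₗ[A] V) (T : ℕ) (hT : g ^ T = 0) :
    Module.finrank A V ≤ T * Module.finrank A (LinearMap.ker g) := by
  have step : ∀ N : Submodule A V, Module.finrank A N ≤
      Module.finrank A (N.map g) + Module.finrank A (LinearMap.ker g) := by
    intro N
    have h1 := rank_null (g.domRestrict N)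
    rw [LinearMap.range_domRestrict] at h1
    have h2 : Module.finrank A (LinearMap.ker (g.domRestrict N)) ≤
        Module.finrank A (LinearMap.ker g) := by
      let f : LinearMap.ker (g.domRestrict N) →ₗ[A] LinearMap.ker g :=
        (N.subtype.comp (LinearMap.ker (g.domRestrict N)).subtype).codRestrict _ (by
          rintro ⟨x, hx⟩
          exact hx)
      apply LinearMap.finrank_le_finrank_of_injective (f := f)
      intro a b hab
      have := congrArg Subtype.val hab
      exact Subtype.ext (Subtype.ext this)
    omega
  have main : ∀ j, Module.finrank A V ≤ Module.finrank A (LinearMap.range (g ^ j)) +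
      j * Module.finrank A (LinearMap.ker g) := by
    intro j
    induction j with
    | zero =>
      rw [pow_zero, Module.End.one_eq_id, LinearMap.range_id, finrank_top]
      simp
    | succ j ih =>
      have := step (LinearMap.range (g ^ j))
      rw [← LinearMap.range_comp, ← Module.End.mul_eq_comp, ← pow_succ'] at this
      rw [add_mul, one_mul]
      omega
  have := main T
  rw [hT, LinearMap.range_zero] at this
  simpa using this

theorem rank_bound {A C : Type*} [CommRing A] [IsDomain A] [IsNoetherianRing A]
    [CommRing C] [Nontrivial C] [Algebra A C] [Module.Free A C] [Module.Finite A C]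
    (G : C[X]) (hG : G.Monic) (E T : ℕ) (hT : X ^ E ∣ G ^ T) :
    Module.Finite A (AdjoinRoot G) ∧
    ∃ ρ, Module.finrank A C * E ≤ T * ρ ∧
      Module.finrank A (LinearMap.range (LinearMap.mulLeft A (AdjoinRoot.root G ^ E))) + ρ ≤
        G.natDegree * Module.finrank A C := by
  have fin : ∀ P : C[X], P.Monic → Module.Finite A (AdjoinRoot P) ∧
      Module.finrank A (AdjoinRoot P) = P.natDegree * Module.finrank A C := by
    intro P hP
    have : Module.Finite C (AdjoinRoot P) := hP.finite_adjoinRoot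
    have : Module.Free C (AdjoinRoot P) := hP.free_adjoinRoot
    refine ⟨Module.Finite.trans C _, ?_⟩
    rw [← Module.finrank_mul_finrank A C (AdjoinRoot P), mul_comm]
    congr 1
    rw [(AdjoinRoot.powerBasis' hP).finrank]
    rfl
  obtain ⟨hf, hr⟩ := fin G hG
  refine ⟨hf, ?_⟩
  have hXE : (X ^ E : C[X]).Monic := monic_X_pow E
  obtain ⟨hf', hr'⟩ := fin (X ^ E) hXE
  rw [natDegree_X_pow] at hr'
  set V := AdjoinRoot (X ^ E : C[X]) with hV
  let γ : V := AdjoinRoot.mk _ G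
  have hγ : γ ^ T = 0 := by
    rw [← map_pow, AdjoinRoot.mk_eq_zero]; exact hT
  let D := V ⧸ Ideal.span {γ}
  let p : V →ₐ[A] D := Ideal.Quotient.mkₐ A _
  have hker : LinearMap.ker p.toLinearMap = LinearMap.range (LinearMap.mulLeft A γ) := by
    ext x
    rw [LinearMap.mem_ker, LinearMap.mem_range]
    change Ideal.Quotient.mk _ x = 0 ↔ _
    rw [Ideal.Quotient.eq_zero_iff_mem, Ideal.mem_span_singleton']
    simp only [LinearMap.mulLeft_apply, mul_comm]
  have hps : LinearMap.range p.toLinearMap = ⊤ :=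
    LinearMap.range_eq_top.2 (Ideal.Quotient.mk_surjective)
  have e1 := rank_null p.toLinearMap
  have e2 := rank_null (LinearMap.mulLeft A γ)
  rw [hps, hker, finrank_top] at e1
  have e3 := finrank_le_of_nilp (LinearMap.mulLeft A γ) T (by
    rw [LinearMap.pow_mulLeft, hγ, LinearMap.mulLeft_zero_eq_zero])
  refine ⟨Module.finrank A D, ?_, ?_⟩
  · rw [mul_comm, ← hr']
    have : Module.finrank A D = Module.finrank A (LinearMap.ker (LinearMap.mulLeft A γ)) := by
      omega
    rw [this]; exact e3
  · let π : AdjoinRoot G →ₐ[C] D := AdjoinRoot.liftAlgHom G (Algebra.ofId C D)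
      (Ideal.Quotient.mk _ (AdjoinRoot.root (X ^ E : C[X]))) (by
        have h : ∀ P : C[X], eval₂ (Algebra.ofId C D : C →+* D)
          (Ideal.Quotient.mk _ (AdjoinRoot.root (X ^ E : C[X]))) P =
            Ideal.Quotient.mk (Ideal.span {γ}) (AdjoinRoot.mk _ P) := by
          intro P
          rw [← AdjoinRoot.aeval_eq, ← Ideal.Quotient.mkₐ_eq_mk C, ← aeval_algHom_apply]
          rfl
        exact (h G).trans (Ideal.Quotient.eq_zero_iff_mem.2 (Ideal.mem_span_singleton_self _)))
    let π' : AdjoinRoot G →ₗ[A] D := π.toLinearMap.restrictScalars A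
    have hroot : π (AdjoinRoot.root G) = Ideal.Quotient.mk _ (AdjoinRoot.root (X ^ E : C[X])) :=
      AdjoinRoot.liftAlgHom_root _ _ _ _
    have hπs : LinearMap.range π' = ⊤ := by
      rw [LinearMap.range_eq_top]
      intro y
      obtain ⟨y, rfl⟩ := Ideal.Quotient.mk_surjective y
      obtain ⟨P, rfl⟩ := AdjoinRoot.mk_surjective y
      refine ⟨AdjoinRoot.mk G P, ?_⟩
      change π (AdjoinRoot.mk G P) = _
      rw [← AdjoinRoot.aeval_eq, ← AdjoinRoot.aeval_eq, ← aeval_algHom_apply, hroot,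
        ← Ideal.Quotient.mkₐ_eq_mk C, ← aeval_algHom_apply]
    have e4 := rank_null π'
    rw [hπs, finrank_top, hr] at e4
    have hle : LinearMap.range (LinearMap.mulLeft A (AdjoinRoot.root G ^ E)) ≤ LinearMap.ker π' := by
      rintro _ ⟨x, rfl⟩
      rw [LinearMap.mem_ker]
      change π (AdjoinRoot.root G ^ E * x) = 0
      rw [map_mul, map_pow, hroot, ← map_pow]
      have : (AdjoinRoot.root (X ^ E : C[X])) ^ E = 0 := by
        rw [← AdjoinRoot.mk_X, ← map_pow, AdjoinRoot.mk_self]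
      rw [this, map_zero, zero_mul]
    have := Submodule.finrank_mono hle
    omega

universe u

theorem exists_trunc (A : Type u) [CommRing A] [Nontrivial A] (M : ℕ) (hM : 0 < M) :
    ∃ (C : Type u) (_ : CommRing C) (_ : Algebra A C) (ξ ζ : C), Nontrivial C ∧ Module.Free A C ∧
      Module.Finite A C ∧ Module.finrank A C = M * M ∧ ξ ^ M = 0 ∧ ζ ^ M = 0 ∧
      ∀ (D : Type u) [CommRing D] [Algebra A D] (a b : D), a ^ M = 0 → b ^ M = 0 →
        ∃ θ : C →ₐ[A] D, θ ξ = a ∧ θ ζ = b := by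
  have hnt : ∀ {S : Type u} [CommRing S] [Nontrivial S] (_ : (X ^ M : S[X]).Monic),
      Nontrivial (AdjoinRoot (X ^ M : S[X])) := by
    intro S _ _ hm
    refine Ideal.Quotient.nontrivial_iff.2 ?_
    rw [Ne, Ideal.span_singleton_eq_top, isUnit_pow_iff hM.ne']
    exact not_isUnit_X
  let C1 := AdjoinRoot (X ^ M : A[X])
  have m1 : (X ^ M : A[X]).Monic := monic_X_pow M
  have n1 : Nontrivial C1 := hnt m1
  let C := AdjoinRoot (X ^ M : C1[X])
  have m2 : (X ^ M : C1[X]).Monic := monic_X_pow M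
  have n2 : Nontrivial C := hnt m2
  have f1 : Module.Finite A C1 := m1.finite_adjoinRoot
  have f2 : Module.Finite C1 C := m2.finite_adjoinRoot
  have g1 : Module.Free A C1 := m1.free_adjoinRoot
  have g2 : Module.Free C1 C := m2.free_adjoinRoot
  refine ⟨C, inferInstance, inferInstance, algebraMap C1 C (AdjoinRoot.root _), AdjoinRoot.root _,
    n2, Module.Free.trans (S := C1), Module.Finite.trans C1 C, ?_, ?_, ?_, ?_⟩
  · rw [← Module.finrank_mul_finrank A C1 C]
    rw [show Module.finrank A C1 = M from ?_, show Module.finrank C1 C = M from ?_]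
    · exact ((AdjoinRoot.powerBasis' m2).finrank).trans (natDegree_X_pow M)
    · exact ((AdjoinRoot.powerBasis' m1).finrank).trans (natDegree_X_pow M)
  · rw [← map_pow, ← AdjoinRoot.mk_X, ← map_pow, AdjoinRoot.mk_self, map_zero]
  · rw [← AdjoinRoot.mk_X, ← map_pow, AdjoinRoot.mk_self]
  · intro D _ _ a b ha hb
    let θ1 : C1 →ₐ[A] D := AdjoinRoot.liftAlgHom _ (Algebra.ofId A D) a (by
      rw [eval₂_X_pow, ha])
    let θ : C →ₐ[A] D := AdjoinRoot.liftAlgHom _ θ1 b (by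
      rw [eval₂_X_pow, hb])
    refine ⟨θ, ?_, ?_⟩
    · have : θ (algebraMap C1 C (AdjoinRoot.root _)) = θ1 (AdjoinRoot.root _) :=
        AdjoinRoot.liftAlgHom_of _ _ _ _ _
      rw [this]
      exact AdjoinRoot.liftAlgHom_root _ _ _ _
    · exact AdjoinRoot.liftAlgHom_root _ _ _ _

/-- Evaluation of bivariate polynomials. -/
noncomputable def ev2 (k : Type*) {A : Type*} [Field k] [CommRing A] [Algebra k A] (x z : A) :
    k[X][X] →+* A := eval₂RingHom (aeval x : k[X] →ₐ[k] A).toRingHom z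

theorem ev2_hom_ext {k A : Type*} [Field k] [CommRing A]
    (f g : k[X][X] →+* A) (h0 : ∀ c : k, f (C (C c)) = g (C (C c))) (hx : f (C X) = g (C X))
    (hz : f X = g X) : f = g := by
  apply Polynomial.ringHom_ext'
  · apply Polynomial.ringHom_ext'
    · ext c; exact h0 c
    · exact hx
  · exact hz

section
variable {k A : Type*} [Field k] [CommRing A] [Algebra k A] (x z : A)
@[simp] theorem ev2_CC (c : k) : ev2 k x z (C (C c)) = algebraMap k A c := by simp [ev2]
@[simp] theorem ev2_CX : ev2 k x z (C X) = x := by simp [ev2]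
@[simp] theorem ev2_X : ev2 k x z X = z := by simp [ev2]
end

theorem aux_poly {k : Type*} {A : Type u} [Field k] [Fintype k] [CommRing A] [IsDomain A]
    [IsNoetherianRing A] [Algebra k A] (x z y : A) (G : k[X][X][X]) (hG : G.Monic)
    (hy : eval₂ (ev2 k x z) y G = 0) (M m : ℕ) (hM : 0 < M)
    (hMm : 2 * (G.natDegree * M ^ 2) < 2 * (G.natDegree * m ^ 2) + M ^ 2) :
    ∃ h : Fin m × Fin m × Fin G.natDegree → A, h ≠ 0 ∧ ∀ r : ℕ,
      (∑ i, h i * (x ^ (i.1 : ℕ) * z ^ (i.2.1 : ℕ) * y ^ (i.2.2 : ℕ)) ^ (Fintype.card k ^ r)) *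
        (y ^ (Fintype.card k ^ r) - y) ^ (2 * M) ∈
      Ideal.span {(x ^ (Fintype.card k ^ r) - x) ^ M} ⊔
        Ideal.span {(z ^ (Fintype.card k ^ r) - z) ^ M} := by
  obtain ⟨R, _, _, ξ, ζ, _, _, _, hrk, hξ, hζ, huniv⟩ := exists_trunc A M hM
  let _ : Algebra k R := ((algebraMap A R).comp (algebraMap k A)).toAlgebra
  have : IsScalarTower k A R := IsScalarTower.of_algebraMap_eq fun _ => rfl
  let x' : R := algebraMap A R x + ξ
  let z' : R := algebraMap A R z + ζ
  let G1 : R[X] := G.map (ev2 k x' z')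
  let G' : R[X] := G1.comp (X + C (algebraMap A R y))
  have hG1 : G1.Monic := hG.map _
  have hG' : G'.Monic := hG1.comp_X_add_C _
  have hd : G'.natDegree = G.natDegree := by
    have h1 : G'.natDegree = G1.natDegree := by
      have := natDegree_taylor G1 (algebraMap A R y)
      rwa [taylor_apply] at this
    rw [h1, hG.natDegree_map]
  -- nilpotency of the constant term
  let I : Ideal R := Ideal.span {ξ} ⊔ Ideal.span {ζ}
  have hI : I ^ (M + M) = ⊥ := by
    rw [eq_bot_iff]
    refine (Ideal.sup_pow_add_le_pow_sup_pow).trans ?_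
    rw [Ideal.span_singleton_pow, Ideal.span_singleton_pow, hξ, hζ]
    simp
  let g0 : R := G1.eval (algebraMap A R y)
  have hg0 : g0 ∈ I := by
    rw [← Ideal.Quotient.eq_zero_iff_mem]
    have hxi : Ideal.Quotient.mk I ξ = 0 := Ideal.Quotient.eq_zero_iff_mem.2
      (Ideal.mem_sup_left (Ideal.mem_span_singleton_self _))
    have hzi : Ideal.Quotient.mk I ζ = 0 := Ideal.Quotient.eq_zero_iff_mem.2
      (Ideal.mem_sup_right (Ideal.mem_span_singleton_self _))
    have hh : (Ideal.Quotient.mk I).comp (ev2 k x' z') =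
        ((Ideal.Quotient.mk I).comp (algebraMap A R)).comp (ev2 k x z) := by
      apply ev2_hom_ext
      · intro c
        simp only [RingHom.comp_apply, ev2_CC]
        rw [IsScalarTower.algebraMap_apply k A R]
      · simp [x', hxi]
      · simp [z', hzi]
    change Ideal.Quotient.mk I (eval _ (G.map _)) = 0
    rw [eval_map, hom_eval₂, hh, ← RingHom.comp_apply (Ideal.Quotient.mk I), ← hom_eval₂, hy,
      map_zero]
  have hg0' : g0 ^ (2 * M) = 0 := by
    have := Ideal.pow_mem_pow hg0 (M + M)
    rw [hI, ← two_mul] at this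
    exact this
  have hdvd : X ^ (2 * M) ∣ G' ^ (2 * M + 2 * M) := by
    have h1 : G' ∈ Ideal.span {(X : R[X])} ⊔ Ideal.span {C g0} := by
      have h2 : G' = X * G'.divX + C g0 := by
        conv_lhs => rw [← X_mul_divX_add G']
        congr 2
        rw [coeff_zero_eq_eval_zero, eval_comp]
        simp [g0]
      rw [h2]
      exact Submodule.add_mem_sup (Ideal.mul_mem_right _ _ (Ideal.mem_span_singleton_self _))
        (Ideal.mem_span_singleton_self _)
    have h3 := Ideal.sup_pow_add_le_pow_sup_pow (Ideal.pow_mem_pow h1 (2 * M + 2 * M))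
    rw [Ideal.span_singleton_pow, Ideal.span_singleton_pow, ← C_pow, hg0', C_0] at h3
    simpa [Ideal.mem_span_singleton] using h3
  obtain ⟨hfin, ρ, hρ1, hρ2⟩ := rank_bound (A := A) G' hG' _ _ hdvd
  rw [hd, hrk] at hρ2
  rw [hrk] at hρ1
  let υ : AdjoinRoot G' := AdjoinRoot.root G'
  let s : Fin m × Fin m × Fin G.natDegree → AdjoinRoot G' := fun i =>
    AdjoinRoot.of G' x' ^ (i.1 : ℕ) * AdjoinRoot.of G' z' ^ (i.2.1 : ℕ) *
      (algebraMap A _ y + υ) ^ (i.2.2 : ℕ)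
  let Λ : (Fin m × Fin m × Fin G.natDegree → A) →ₗ[A] AdjoinRoot G' :=
    (LinearMap.mulLeft A (υ ^ (2 * M))).comp (Fintype.linearCombination A s)
  have hΛ : ¬ Function.Injective Λ := by
    intro hinj
    have e1 := LinearMap.finrank_range_of_inj hinj
    have e2 : Module.finrank A (LinearMap.range Λ) ≤ _ :=
      Submodule.finrank_mono (LinearMap.range_comp_le_range _ (LinearMap.mulLeft A (υ ^ (2 * M))))
    rw [e1, Module.finrank_fintype_fun_eq_card] at e2
    simp only [Fintype.card_prod, Fintype.card_fin] at e2
    have e3 : M * M ≤ 2 * ρ := by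
      have : M * M * (2 * M) ≤ (2 * ρ) * (2 * M) := by
        calc M * M * (2 * M) ≤ (2 * M + 2 * M) * ρ := hρ1
          _ = (2 * ρ) * (2 * M) := by ring
      exact Nat.le_of_mul_le_mul_right this (by omega)
    have e4 : m * (m * G.natDegree) + ρ ≤ G.natDegree * (M * M) :=
      le_trans (Nat.add_le_add_right e2 ρ) hρ2
    nlinarith
  obtain ⟨h, hh0, hhne⟩ : ∃ h, Λ h = 0 ∧ h ≠ 0 := by
    by_contra hcon
    push Not at hcon
    exact hΛ ((injective_iff_map_eq_zero Λ).2 hcon)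
  refine ⟨h, hhne, fun r => ?_⟩
  set Q := Fintype.card k ^ r with hQ
  let J : Ideal A := Ideal.span {(x ^ Q - x) ^ M} ⊔ Ideal.span {(z ^ Q - z) ^ M}
  change _ ∈ J
  rw [← Ideal.Quotient.eq_zero_iff_mem]
  obtain ⟨θ, hθ1, hθ2⟩ := huniv (A ⧸ J) (Ideal.Quotient.mk J (x ^ Q - x))
    (Ideal.Quotient.mk J (z ^ Q - z)) (by
      rw [← map_pow, Ideal.Quotient.eq_zero_iff_mem]
      exact Ideal.mem_sup_left (Ideal.mem_span_singleton_self _)) (by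
      rw [← map_pow, Ideal.Quotient.eq_zero_iff_mem]
      exact Ideal.mem_sup_right (Ideal.mem_span_singleton_self _))
  have hθA : ∀ a : A, θ (algebraMap A R a) = Ideal.Quotient.mk J a := fun a => θ.commutes a
  have hx' : θ x' = Ideal.Quotient.mk J (x ^ Q) := by
    rw [map_add, hθA, hθ1, ← map_add, add_sub_cancel]
  have hz' : θ z' = Ideal.Quotient.mk J (z ^ Q) := by
    rw [map_add, hθA, hθ2, ← map_add, add_sub_cancel]
  have hcomp : (θ : R →+* A ⧸ J).comp (ev2 k x' z') =
      ((Ideal.Quotient.mk J).comp (fr k A r).toRingHom).comp (ev2 k x z) := by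
    apply ev2_hom_ext
    · intro c
      simp only [RingHom.comp_apply, ev2_CC, RingHom.coe_coe, AlgHom.toRingHom_eq_coe,
        AlgHom.commutes]
      rw [IsScalarTower.algebraMap_apply k A R, hθA]
    · simp only [RingHom.comp_apply, ev2_CX, RingHom.coe_coe, AlgHom.toRingHom_eq_coe]
      rw [hx', fr_apply]
    · simp only [RingHom.comp_apply, ev2_X, RingHom.coe_coe, AlgHom.toRingHom_eq_coe]
      rw [hz', fr_apply]
  let Θ : AdjoinRoot G' →+* A ⧸ J := AdjoinRoot.lift (θ : R →+* A ⧸ J)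
    (Ideal.Quotient.mk J (y ^ Q - y)) (by
      change eval₂ _ _ ((G.map _).comp _) = 0
      rw [eval₂_comp, eval₂_add, eval₂_X, eval₂_C, RingHom.coe_coe, hθA, ← map_add,
        sub_add_cancel, eval₂_map, hcomp]
      rw [show Ideal.Quotient.mk J (y ^ Q) = ((Ideal.Quotient.mk J).comp (fr k A r).toRingHom) y by
        simp [fr_apply, hQ]]
      rw [← hom_eval₂, hy, map_zero])
  have hΘr : Θ υ = Ideal.Quotient.mk J (y ^ Q - y) := AdjoinRoot.lift_root _
  have hΘo : ∀ c : R, Θ (AdjoinRoot.of G' c) = θ c := fun c => AdjoinRoot.lift_of _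
  have hΘA : ∀ a : A, Θ (algebraMap A _ a) = Ideal.Quotient.mk J a := fun a =>
    (hΘo (algebraMap A R a)).trans (hθA a)
  have := congrArg Θ hh0
  rw [map_zero] at this
  rw [← this]
  simp only [Λ, LinearMap.comp_apply, LinearMap.mulLeft_apply, Fintype.linearCombination_apply,
    map_mul, map_pow, hΘr, map_sum]
  rw [mul_comm]
  rw [Finset.mul_sum]
  refine Finset.sum_congr rfl fun i _ => ?_
  rw [Algebra.smul_def, map_mul, hΘA]
  simp only [s, map_mul, map_pow, map_add, hΘo, hx', hz', hΘA, hΘr, map_sub, add_sub_cancel]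
  ring
theorem exists_point {k A F : Type*} [Field k] [Fintype k] [CommRing A] [Algebra k A]
    [Field F] [Fintype F] [Algebra k F] (r : ℕ) (hr : 0 < r)
    (hF : Fintype.card F = Fintype.card k ^ r) (s : Set A) (hs : Algebra.adjoin k s = ⊤)
    (I : Ideal A) (hI : ∀ a ∈ s, a ^ (Fintype.card k ^ r) - a ∈ I) (δ : A) (hδ : δ ∉ I) :
    ∃ ψ : A →ₐ[k] F, ψ δ ≠ 0 := by
  set Q := Fintype.card k ^ r with hQ
  have hQ1 : 1 < Q := one_lt_pow₀ Fintype.one_lt_card hr.ne'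
  have hD : ∀ t : A ⧸ I, t ^ Q = t := by
    intro t
    obtain ⟨a, rfl⟩ := Ideal.Quotient.mk_surjective t
    have : (fr k (A ⧸ I) r).comp (Ideal.Quotient.mkₐ k I) = Ideal.Quotient.mkₐ k I := by
      apply AlgHom.ext_of_adjoin_eq_top hs
      intro a ha
      rw [AlgHom.comp_apply, fr_apply, ← map_pow]
      exact Ideal.Quotient.eq.2 (hI a ha)
    have h2 := DFunLike.congr_fun this a
    rw [AlgHom.comp_apply, fr_apply] at h2
    exact h2
  have hnil : ¬ IsNilpotent (Ideal.Quotient.mk I δ) := by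
    rintro ⟨n, hn⟩
    have : ∀ (t : A ⧸ I) (j : ℕ), t ^ (Q ^ j) = t := by
      intro t j
      induction j with
      | zero => simp
      | succ j ih => rw [pow_succ, pow_mul, ih, hD]
    have h1 := this (Ideal.Quotient.mk I δ) n
    rw [pow_eq_zero_of_le (Nat.lt_pow_self hQ1).le hn] at h1
    exact hδ (Ideal.Quotient.eq_zero_iff_mem.1 h1.symm)
  rw [nilpotent_iff_mem_prime] at hnil
  push Not at hnil
  obtain ⟨p, hp, hpδ⟩ := hnil
  let E := FractionRing ((A ⧸ I) ⧸ p)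
  have hE : ∀ t : E, t ^ Q = t := by
    intro t
    obtain ⟨a, b, -, rfl⟩ := IsFractionRing.div_surjective (A := (A ⧸ I) ⧸ p) t
    have h1 : ∀ a : (A ⧸ I) ⧸ p, a ^ Q = a := by
      intro a
      obtain ⟨a, rfl⟩ := Ideal.Quotient.mk_surjective a
      rw [← map_pow, hD]
    rw [div_pow, ← map_pow, ← map_pow, h1, h1]
  have hm : ((X : k[X]) ^ Q - X).Monic := by
    apply monic_X_pow_sub
    rw [degree_X]
    exact_mod_cast hQ1
  have hroot : ∀ t : E, aeval t ((X : k[X]) ^ Q - X) = 0 := by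
    intro t; simp [hE]
  obtain ⟨φ⟩ : Nonempty (E →ₐ[k] F) := by
    apply IntermediateField.nonempty_algHom_of_splits
    intro t
    refine ⟨⟨_, hm, hroot t⟩, ?_⟩
    have hd : minpoly k t ∣ (X : k[X]) ^ Q - X := minpoly.dvd _ _ (hroot t)
    have hsp : (((X : k[X]) ^ Q - X).map (algebraMap k F)).Splits := by
      rw [Polynomial.map_sub, Polynomial.map_pow, map_X, ← hF]
      rw [splits_iff_card_roots, FiniteField.roots_X_pow_card_sub_X,
        FiniteField.X_pow_card_sub_X_natDegree_eq _ Fintype.one_lt_card]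
      rfl
    exact hsp.of_dvd (Polynomial.map_ne_zero hm.ne_zero) (Polynomial.map_dvd _ hd)
  let ψ : A →ₐ[k] F := φ.comp ((IsScalarTower.toAlgHom k ((A ⧸ I) ⧸ p) E).comp
    ((Ideal.Quotient.mkₐ k p).comp (Ideal.Quotient.mkₐ k I)))
  refine ⟨ψ, ?_⟩
  intro h
  have h1 : algebraMap ((A ⧸ I) ⧸ p) E (Ideal.Quotient.mk p (Ideal.Quotient.mk I δ)) = 0 :=
    (map_eq_zero_iff φ φ.injective).1 h
  rw [map_eq_zero_iff _ (IsFractionRing.injective _ _), Ideal.Quotient.eq_zero_iff_mem] at h1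
  exact hpδ h1

theorem bivar_zero {R : Type*} [CommRing R] [IsDomain R] (b u v P2 : R[X][X]) (p1 : R[X])
    (h2 : P2.Monic) (hb : b.natDegree < P2.natDegree)
    (hbc : ∀ i, (b.coeff i).natDegree < p1.natDegree) (hp1 : p1 ≠ 0)
    (h : b = C p1 * u + P2 * v) : b = 0 := by
  have h1 := modByMonic_add_div u P2
  have e1 : C p1 * (u %ₘ P2) + P2 * (C p1 * (u /ₘ P2) + v) = b := by
    rw [h]
    conv_rhs => rw [← h1]
    ring
  have hne : P2 ≠ 1 := by
    rintro rfl
    simp at hb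
  have hdeg : (C p1 * (u %ₘ P2)).degree < P2.degree := by
    refine lt_of_le_of_lt ?_ (degree_modByMonic_lt u h2)
    rw [degree_mul, degree_C hp1, zero_add]
  have e2 := (div_modByMonic_unique _ _ h2 ⟨e1, hdeg⟩).2
  have e3 : b %ₘ P2 = b := (modByMonic_eq_self_iff h2).2 (degree_lt_degree hb)
  rw [e3] at e2
  ext1 i
  have e4 : b.coeff i = p1 * (u %ₘ P2).coeff i := by
    conv_lhs => rw [e2]
    rw [coeff_C_mul]
  rw [coeff_zero]
  by_contra hne0
  have hu : (u %ₘ P2).coeff i ≠ 0 := by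
    intro h0
    rw [h0, mul_zero] at e4
    exact hne0 e4
  have := hbc i
  rw [e4, natDegree_mul hp1 hu] at this
  omega

/-- spans of monomials with bounded exponents -/
def Red (k : Type*) {A : Type*} [Field k] [CommRing A] [Algebra k A] (x z y : A) (d D : ℕ) :
    Submodule k A :=
  Submodule.span k {a | ∃ i j l : ℕ, i ≤ D ∧ j ≤ D ∧ l < d ∧ a = x ^ i * z ^ j * y ^ l}

def Wt (k : Type*) {A : Type*} [Field k] [CommRing A] [Algebra k A] (x z y : A) (w D : ℕ) :
    Submodule k A :=
  Submodule.span k {a | ∃ i j l : ℕ, i + w * l ≤ D ∧ j + w * l ≤ D ∧ a = x ^ i * z ^ j * y ^ l}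

section
variable {k A : Type*} [Field k] [CommRing A] [Algebra k A] (x z y : A)

theorem Red_mono (d : ℕ) {D D' : ℕ} (h : D ≤ D') : Red k x z y d D ≤ Red k x z y d D' := by
  apply Submodule.span_mono
  rintro a ⟨i, j, l, hi, hj, hl, rfl⟩
  exact ⟨i, j, l, hi.trans h, hj.trans h, hl, rfl⟩

theorem Wt_mono (w : ℕ) {D D' : ℕ} (h : D ≤ D') : Wt k x z y w D ≤ Wt k x z y w D' := by
  apply Submodule.span_mono
  rintro a ⟨i, j, l, hi, hj, rfl⟩
  exact ⟨i, j, l, hi.trans h, hj.trans h, rfl⟩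

theorem Wt_mul (w : ℕ) {D D' : ℕ} {a b : A} (ha : a ∈ Wt k x z y w D) (hb : b ∈ Wt k x z y w D') :
    a * b ∈ Wt k x z y w (D + D') := by
  have := Submodule.mul_mem_mul ha hb
  rw [Wt, Wt, Submodule.span_mul_span] at this
  refine Submodule.span_mono ?_ this
  rintro _ ⟨_, ⟨i, j, l, hi, hj, rfl⟩, _, ⟨i', j', l', hi', hj', rfl⟩, rfl⟩
  refine ⟨i + i', j + j', l + l', ?_, ?_, ?_⟩
  · rw [mul_add]; omega
  · rw [mul_add]; omega
  · simp only; ring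

theorem Wt_pow (w : ℕ) {D : ℕ} {a : A} (ha : a ∈ Wt k x z y w D) (n : ℕ) :
    a ^ n ∈ Wt k x z y w (n * D) := by
  induction n with
  | zero =>
    rw [pow_zero]
    exact Submodule.subset_span ⟨0, 0, 0, by simp, by simp, by simp⟩
  | succ n ih =>
    rw [pow_succ, add_mul, one_mul]
    exact Wt_mul x z y w ih ha

theorem Red_le_Wt (w d D : ℕ) : Red k x z y d D ≤ Wt k x z y w (D + w * d) := by
  apply Submodule.span_mono
  rintro a ⟨i, j, l, hi, hj, hl, rfl⟩
  have : w * l ≤ w * d := Nat.mul_le_mul_left _ hl.le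
  exact ⟨i, j, l, by omega, by omega, rfl⟩

theorem Wt_le_Red (w d D : ℕ) (hd : y ^ d ∈ Red k x z y d w) :
    Wt k x z y w D ≤ Red k x z y d D := by
  have main : ∀ l i j, i + w * l ≤ D → j + w * l ≤ D →
      x ^ i * z ^ j * y ^ l ∈ Red k x z y d D := by
    intro l
    induction l using Nat.strong_induction_on with
    | _ l ih =>
      intro i j hi hj
      by_cases hl : l < d
      · exact Submodule.subset_span ⟨i, j, l, by omega, by omega, hl, rfl⟩
      · push Not at hl
        obtain ⟨c, rfl⟩ := Nat.exists_eq_add_of_le hl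
        have e : x ^ i * z ^ j * y ^ (d + c) =
            LinearMap.mulLeft k (x ^ i * z ^ j * y ^ c) (y ^ d) := by
          rw [LinearMap.mulLeft_apply]; ring
        rw [e]
        have : Red k x z y d w ≤
            (Red k x z y d D).comap (LinearMap.mulLeft k (x ^ i * z ^ j * y ^ c)) := by
          apply Submodule.span_le.2
          rintro _ ⟨i', j', l', hi', hj', hl', rfl⟩
          have e2 : x ^ i * z ^ j * y ^ c * (x ^ i' * z ^ j' * y ^ l') =
            x ^ (i + i') * z ^ (j + j') * y ^ (c + l') := by ring
          rw [SetLike.mem_coe, Submodule.mem_comap, LinearMap.mulLeft_apply, e2]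
          have h3 : w + w * (c + l') ≤ w * (d + c) := by
            calc w + w * (c + l') = w * (c + l' + 1) := by ring
              _ ≤ w * (d + c) := Nat.mul_le_mul_left _ (by omega)
          exact ih (c + l') (by omega) _ _ (by omega) (by omega)
        exact this hd
  apply Submodule.span_le.2
  rintro _ ⟨i, j, l, hi, hj, rfl⟩
  exact main l i j hi hj

end

theorem bivar_span {k : Type*} [Field k] (b : k[X][X]) :
    ∃ w, b ∈ Red k (C X : k[X][X]) X 1 1 w := by
  induction b using Polynomial.induction_on' with
  | add p q hp hq =>
    obtain ⟨w, hw⟩ := hp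
    obtain ⟨w', hw'⟩ := hq
    exact ⟨max w w', add_mem (Red_mono _ _ _ _ (le_max_left _ _) hw)
      (Red_mono _ _ _ _ (le_max_right _ _) hw')⟩
  | monomial n p =>
    induction p using Polynomial.induction_on' with
    | add p q hp hq =>
      obtain ⟨w, hw⟩ := hp
      obtain ⟨w', hw'⟩ := hq
      rw [map_add]
      exact ⟨max w w', add_mem (Red_mono _ _ _ _ (le_max_left _ _) hw)
        (Red_mono _ _ _ _ (le_max_right _ _) hw')⟩
    | monomial m c =>
      refine ⟨max m n, ?_⟩
      have : monomial n (monomial m c) = c • ((C X : k[X][X]) ^ m * X ^ n * 1 ^ 0) := by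
        rw [one_pow, mul_one, ← C_mul_X_pow_eq_monomial, ← C_mul_X_pow_eq_monomial, Algebra.smul_def]
        rw [map_mul, map_pow]
        rw [mul_assoc]
        rfl
      rw [this]
      exact Submodule.smul_mem _ _ (Submodule.subset_span
        ⟨m, n, 0, le_max_left _ _, le_max_right _ _, by simp, rfl⟩)

section
variable {k : Type*} {A : Type u} [Field k] [CommRing A] [Algebra k A] [Algebra k[X][X] A]
  [IsScalarTower k k[X][X] A] (pb : PowerBasis k[X][X] A)

theorem pb_span (b : k[X][X]) (l : ℕ) (hl : l < pb.dim) : ∃ w, algebraMap k[X][X] A b * pb.gen ^ l ∈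
    Red k (algebraMap k[X][X] A (C X)) (algebraMap k[X][X] A X) pb.gen pb.dim w := by
  obtain ⟨w, hw⟩ := bivar_span b
  refine ⟨w, ?_⟩
  let f : k[X][X] →ₗ[k] A := (LinearMap.mulRight k (pb.gen ^ l)).comp
    (IsScalarTower.toAlgHom k k[X][X] A).toLinearMap
  change f b ∈ _
  have : Red k (C X : k[X][X]) X 1 1 w ≤ (Red k (algebraMap k[X][X] A (C X))
      (algebraMap k[X][X] A X) pb.gen pb.dim w).comap f := by
    apply Submodule.span_le.2
    rintro _ ⟨i, j, l', hi, hj, -, rfl⟩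
    refine Submodule.subset_span ⟨i, j, l, hi, hj, hl, ?_⟩
    change algebraMap _ A _ * pb.gen ^ l = _
    simp
  exact this hw

theorem pb_exists_Red (a : A) : ∃ w, a ∈
    Red k (algebraMap k[X][X] A (C X)) (algebraMap k[X][X] A X) pb.gen pb.dim w := by
  have h := pb.basis.sum_repr a
  choose w hw using fun i : Fin pb.dim => pb_span pb (pb.basis.repr a i) i i.2
  refine ⟨∑ i, w i, ?_⟩
  rw [← h]
  refine Submodule.sum_mem _ fun i _ => ?_
  rw [pb.basis_eq_pow, Algebra.smul_def]
  exact Red_mono _ _ _ _ (Finset.single_le_sum (fun _ _ => Nat.zero_le _) (Finset.mem_univ i)) (hw i)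

theorem pb_Red_repr {D : ℕ} {a : A} (ha : a ∈
    Red k (algebraMap k[X][X] A (C X)) (algebraMap k[X][X] A X) pb.gen pb.dim D) (l : Fin pb.dim) :
    (pb.basis.repr a l).natDegree ≤ D ∧ ∀ i, ((pb.basis.repr a l).coeff i).natDegree ≤ D := by
  induction ha using Submodule.span_induction with
  | mem a ha =>
    obtain ⟨i, j, l', hi, hj, hl', rfl⟩ := ha
    have e : algebraMap k[X][X] A (C X) ^ i * algebraMap k[X][X] A X ^ j * pb.gen ^ l' =
        ((C X : k[X][X]) ^ i * X ^ j) • pb.basis ⟨l', hl'⟩ := by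
      rw [pb.basis_eq_pow, Algebra.smul_def, map_mul, map_pow, map_pow]
    rw [e, map_smul, pb.basis.repr_self, Finsupp.smul_single, smul_eq_mul, mul_one,
      Finsupp.single_apply]
    split_ifs
    · rw [← C_pow]
      refine ⟨(natDegree_C_mul_X_pow_le _ _).trans hj, fun n => ?_⟩
      rw [coeff_C_mul_X_pow]
      split_ifs
      · rw [natDegree_X_pow]; exact hi
      · simp
    · simp
  | zero => simp
  | add a b _ _ h1 h2 =>
    rw [map_add, Finsupp.add_apply]
    refine ⟨(natDegree_add_le _ _).trans (max_le h1.1 h2.1), fun i => ?_⟩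
    rw [coeff_add]
    exact (natDegree_add_le _ _).trans (max_le (h1.2 i) (h2.2 i))
  | smul c a _ h =>
    have e : c • a = (algebraMap k k[X][X] c) • a := by
      rw [Algebra.smul_def, Algebra.smul_def, ← IsScalarTower.algebraMap_apply k k[X][X] A]
    have e2 : algebraMap k k[X][X] c = C (C c) := rfl
    rw [e, map_smul, Finsupp.smul_apply, smul_eq_mul, e2]
    refine ⟨(natDegree_C_mul_le _ _).trans h.1, fun i => ?_⟩
    rw [coeff_C_mul]
    exact (natDegree_C_mul_le _ _).trans (h.2 i)

theorem pb_linInd (m : ℕ) : LinearIndependent k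
    (fun i : Fin m × Fin m × Fin pb.dim => algebraMap k[X][X] A (C X) ^ (i.1 : ℕ) *
      algebraMap k[X][X] A X ^ (i.2.1 : ℕ) * pb.gen ^ (i.2.2 : ℕ)) := by
  have h1 : LinearIndependent k (fun i : ℕ => (X : k[X]) ^ i) := by
    have := (Polynomial.basisMonomials k).linearIndependent
    convert this with i
    simp [X_pow_eq_monomial]
  have h2 : LinearIndependent k[X] (fun i : ℕ => (X : k[X][X]) ^ i) := by
    have := (Polynomial.basisMonomials k[X]).linearIndependent
    convert this with i
    simp [X_pow_eq_monomial]
  have h3 := linearIndependent_smul h1 h2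
  have h4 := linearIndependent_smul h3 pb.basis.linearIndependent
  let g : Fin m × Fin m × Fin pb.dim → (ℕ × ℕ) × Fin pb.dim := fun i => ((i.1, i.2.1), i.2.2)
  have hg : Function.Injective g := by
    rintro ⟨a, b, c⟩ ⟨a', b', c'⟩ h
    simp only [g, Prod.mk.injEq, Fin.val_inj] at h
    obtain ⟨⟨rfl, rfl⟩, rfl⟩ := h
    rfl
  have h5 := h4.comp g hg
  convert h5 with i
  simp only [g, Function.comp_apply, pb.basis_eq_pow, Algebra.smul_def, map_mul, map_pow]
  rfl
end

theorem pb_mem_coord {k : Type*} {A : Type u} [Field k] [CommRing A] [Algebra k[X][X] A]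
    (pb : PowerBasis k[X][X] A) (p1 p2 : k[X][X]) (a : A)
    (ha : a ∈ Ideal.span {algebraMap k[X][X] A p1} ⊔ Ideal.span {algebraMap k[X][X] A p2})
    (l : Fin pb.dim) : ∃ u v, pb.basis.repr a l = p1 * u + p2 * v := by
  obtain ⟨b, hb, c, hc, rfl⟩ := Submodule.mem_sup.1 ha
  obtain ⟨b, rfl⟩ := Ideal.mem_span_singleton'.1 hb
  obtain ⟨c, rfl⟩ := Ideal.mem_span_singleton'.1 hc
  refine ⟨pb.basis.repr b l, pb.basis.repr c l, ?_⟩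
  rw [mul_comm b, mul_comm c, ← Algebra.smul_def, ← Algebra.smul_def]
  simp

theorem core {k : Type*} {A : Type u} [Field k] [Fintype k] [CommRing A] [IsDomain A]
    [Algebra k A] [Algebra k[X][X] A] [IsScalarTower k k[X][X] A] (pb : PowerBasis k[X][X] A)
    (hNV : ∀ (n m : ℕ) (h s : Fin n × Fin n × Fin m → A), h ≠ 0 → LinearIndependent k s →
      ∃ r0 : ℕ, ∀ r ≥ r0, ∑ i, h i * s i ^ (Fintype.card k ^ r) ≠ 0)
    (δ : A) (hδ : δ ≠ 0) :
    ∃ r0 : ℕ, ∀ r ≥ r0, ∀ (F : Type) [Field F] [Fintype F] [Algebra k F],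
      Fintype.card F = Fintype.card k ^ r → ∃ ψ : A →ₐ[k] F, ψ δ ≠ 0 := by
  classical
  set x : A := algebraMap k[X][X] A (C X) with hx
  set z : A := algebraMap k[X][X] A X with hz
  set y : A := pb.gen with hy
  have hd0 : 0 < pb.dim := pb.dim_pos
  have hmon : pb.minpolyGen.Monic := pb.minpolyGen_monic
  have hdG : pb.minpolyGen.natDegree = pb.dim := pb.natDegree_minpolyGen
  have hev : ev2 k x z = algebraMap k[X][X] A := by
    apply ev2_hom_ext
    · intro c
      rw [ev2_CC, IsScalarTower.algebraMap_apply k k[X][X] A]; rfl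
    · simp [hx]
    · simp [hz]
  have hG0 : eval₂ (ev2 k x z) y pb.minpolyGen = 0 := by
    rw [hev]; exact pb.aeval_minpolyGen
  have : Module.Finite k[X][X] A := pb.finite
  have : IsNoetherianRing A := IsNoetherianRing.of_finite k[X][X] A
  obtain ⟨w, hw⟩ := pb_exists_Red pb (y ^ pb.dim)
  rw [← hx, ← hz, ← hy] at hw
  set d := pb.dim with hd
  obtain ⟨t, ht⟩ : ∃ t, t = w * d + 1 := ⟨_, rfl⟩
  obtain ⟨m, hm⟩ : ∃ m, m = 4 * d * t + 1 - t := ⟨_, rfl⟩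
  have htm : t ≤ 4 * d * t := by nlinarith
  obtain ⟨M, hM⟩ : ∃ M, M = m + t := ⟨_, rfl⟩
  have hM' : M = 4 * d * t + 1 := by omega
  have hineq : 2 * (pb.minpolyGen.natDegree * M ^ 2) <
      2 * (pb.minpolyGen.natDegree * m ^ 2) + M ^ 2 := by
    rw [hdG]
    have h1 : 2 * (d * M ^ 2) + 2 * d * t ^ 2 = 2 * (d * m ^ 2) + (4 * d * t) * M := by
      rw [hM]; ring
    have h2 : (4 * d * t) * M < M ^ 2 := by
      rw [pow_two]
      exact Nat.mul_lt_mul_of_pos_right (by omega) (by omega)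
    omega
  have haux := aux_poly x z y pb.minpolyGen hmon hG0 M m (by omega) hineq
  rw [hdG] at haux
  obtain ⟨h, hh0, hh⟩ := haux
  set e : ℕ := (M + M) + 2 * M with he
  obtain ⟨r1, hr1⟩ := hNV m d h _ hh0 (pb_linInd pb m)
  choose w1 hw1 using fun i => pb_exists_Red pb (δ ^ e * h i)
  obtain ⟨l0, hl0⟩ : ∃ l0, l0 = (∑ i, w1 i) + w * d := ⟨_, rfl⟩
  refine ⟨max (max r1 1) l0, fun r hr F _ _ _ hF => ?_⟩
  have hr1' : r1 ≤ r := by omega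
  have hrpos : 0 < r := by omega
  have hlr : l0 ≤ r := by omega
  set Q := Fintype.card k ^ r with hQ
  have hlQ : l0 < Q := lt_of_le_of_lt hlr (Nat.lt_pow_self Fintype.one_lt_card)
  have hQ1 : 1 < Q := one_lt_pow₀ Fintype.one_lt_card hrpos.ne'
  by_contra hno
  have hadj : Algebra.adjoin k ({x, z, y} : Set A) = ⊤ := by
    rw [eq_top_iff]
    intro a _
    obtain ⟨w', hw'⟩ := pb_exists_Red pb a
    have hle : Red k x z y pb.dim w' ≤
        Subalgebra.toSubmodule (Algebra.adjoin k ({x, z, y} : Set A)) := by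
      apply Submodule.span_le.2
      rintro _ ⟨i, j, l, -, -, -, rfl⟩
      have hX : x ∈ Algebra.adjoin k ({x, z, y} : Set A) := Algebra.subset_adjoin (by simp)
      have hZ : z ∈ Algebra.adjoin k ({x, z, y} : Set A) := Algebra.subset_adjoin (by simp)
      have hY : y ∈ Algebra.adjoin k ({x, z, y} : Set A) := Algebra.subset_adjoin (by simp)
      have hm := mul_mem (mul_mem (pow_mem hX i) (pow_mem hZ j)) (pow_mem hY l)
      exact hm
    exact hle hw'
  have hδI : δ ∈ Ideal.span {x ^ Q - x} ⊔ Ideal.span {z ^ Q - z} ⊔ Ideal.span {y ^ Q - y} := by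
    by_contra hδI
    refine hno (exists_point r hrpos hF {x, z, y} hadj _ ?_ δ hδI)
    have m1 : x ^ Q - x ∈ Ideal.span {x ^ Q - x} := Ideal.mem_span_singleton_self _
    have m2 : z ^ Q - z ∈ Ideal.span {z ^ Q - z} := Ideal.mem_span_singleton_self _
    have m3 : y ^ Q - y ∈ Ideal.span {y ^ Q - y} := Ideal.mem_span_singleton_self _
    rintro a (rfl | rfl | rfl)
    · exact Ideal.mem_sup_left (Ideal.mem_sup_left m1)
    · exact Ideal.mem_sup_left (Ideal.mem_sup_right m2)
    · exact Ideal.mem_sup_right m3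
  set J := Ideal.span {(x ^ Q - x) ^ M} ⊔ Ideal.span {(z ^ Q - z) ^ M} with hJ
  have hδe : δ ^ e ∈ J ⊔ Ideal.span {(y ^ Q - y) ^ (2 * M)} := by
    have h1 := Ideal.pow_mem_pow hδI e
    have h2 := Ideal.sup_pow_add_le_pow_sup_pow h1
    rw [Ideal.span_singleton_pow (y ^ Q - y)] at h2
    have h3 : (Ideal.span {x ^ Q - x} ⊔ Ideal.span {z ^ Q - z}) ^ (M + M) ≤ J := ?_
    · exact (sup_le_sup_right h3 _) h2
    refine Ideal.sup_pow_add_le_pow_sup_pow.trans ?_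
    rw [Ideal.span_singleton_pow, Ideal.span_singleton_pow]
  set a : A := ∑ i, h i * (x ^ (i.1 : ℕ) * z ^ (i.2.1 : ℕ) * y ^ (i.2.2 : ℕ)) ^ Q with ha
  have haJ : δ ^ e * a ∈ J := by
    obtain ⟨b, hb, c, hc, hbc⟩ := Submodule.mem_sup.1 hδe
    obtain ⟨c, rfl⟩ := Ideal.mem_span_singleton'.1 hc
    rw [← hbc, add_mul]
    refine J.add_mem (J.mul_mem_right _ hb) ?_
    have : c * (y ^ Q - y) ^ (2 * M) * a = c * (a * (y ^ Q - y) ^ (2 * M)) := by ring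
    rw [this]
    exact J.mul_mem_left _ (hh r)
  have hwt : δ ^ e * a ∈ Wt k x z y w (l0 + Q * (m + w * d)) := by
    rw [ha, Finset.mul_sum]
    refine Submodule.sum_mem _ fun i _ => ?_
    rw [← mul_assoc]
    apply Wt_mul
    · have h1 := Red_le_Wt x z y w d _ (hw1 i)
      refine Wt_mono x z y w ?_ h1
      rw [hl0]
      exact Nat.add_le_add_right
        (Finset.single_le_sum (fun _ _ => Nat.zero_le _) (Finset.mem_univ i)) _
    · apply Wt_pow
      apply Submodule.subset_span
      have hwl : w * (i.2.2 : ℕ) ≤ w * d := Nat.mul_le_mul_left _ i.2.2.2.le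
      have := i.1.2
      have := i.2.1.2
      exact ⟨_, _, _, by omega, by omega, rfl⟩
  have hred := Wt_le_Red x z y w d _ hw hwt
  have hlt : l0 + Q * (m + w * d) < Q * M := by
    have : M = (m + w * d) + 1 := by omega
    rw [this, Nat.mul_succ]; omega
  have hzero : δ ^ e * a = 0 := by
    rw [← pb.basis.repr.map_eq_zero_iff]
    ext1 l
    rw [Finsupp.zero_apply]
    have hb := pb_Red_repr pb hred l
    have hJ' : J = Ideal.span {algebraMap k[X][X] A (C ((X ^ Q - X) ^ M))} ⊔
        Ideal.span {algebraMap k[X][X] A ((X ^ Q - X) ^ M)} := by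
      rw [hJ]; simp [hx, hz]
    rw [hJ'] at haJ
    obtain ⟨u, v, huv⟩ := pb_mem_coord pb _ _ _ haJ l
    have hmon1 : ((X : k[X]) ^ Q - X).Monic := monic_X_pow_sub (by rw [degree_X]; exact_mod_cast hQ1)
    have hmon2 : ((X : k[X][X]) ^ Q - X).Monic :=
      monic_X_pow_sub (by rw [degree_X]; exact_mod_cast hQ1)
    have hdeg1 : (((X : k[X]) ^ Q - X) ^ M).natDegree = Q * M := by
      rw [natDegree_pow, natDegree_sub_eq_left_of_natDegree_lt] <;> simp [hQ1, mul_comm]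
    have hdeg2 : (((X : k[X][X]) ^ Q - X) ^ M).natDegree = Q * M := by
      rw [natDegree_pow, natDegree_sub_eq_left_of_natDegree_lt] <;> simp [hQ1, mul_comm]
    refine bivar_zero _ u v _ _ (hmon2.pow M) ?_ ?_ (hmon1.pow M).ne_zero huv
    · rw [hdeg2]; exact lt_of_le_of_lt hb.1 hlt
    · intro i
      rw [hdeg1]; exact lt_of_le_of_lt (hb.2 i) hlt
  rcases mul_eq_zero.1 hzero with h0 | h0
  · exact hδ (pow_eq_zero_iff (by omega) |>.1 h0)
  · exact hr1 r hr1' h0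

theorem coeff_functional {σ k kb : Type*} [Field k] [CommRing kb] [Algebra k kb]
    (l : kb →ₗ[k] k) (w : MvPolynomial σ kb) :
    ∃ w' : MvPolynomial σ k, ∀ n, w'.coeff n = l (w.coeff n) := by
  classical
  refine ⟨∑ m ∈ w.support, MvPolynomial.monomial m (l (w.coeff m)), fun n => ?_⟩
  rw [MvPolynomial.coeff_sum]
  simp only [MvPolynomial.coeff_monomial]
  rw [Finset.sum_ite_eq']
  split_ifs with h
  · rfl
  · rw [MvPolynomial.notMem_support_iff.1 h, map_zero]

theorem dvd_functional {σ k kb : Type*} [Field k] [CommRing kb] [Algebra k kb]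
    (l : kb →ₗ[k] k) (P U V : MvPolynomial σ k) (θ : kb)
    (h : MvPolynomial.map (algebraMap k kb) P ∣ MvPolynomial.map (algebraMap k kb) U -
      MvPolynomial.C θ * MvPolynomial.map (algebraMap k kb) V) :
    P ∣ MvPolynomial.C (l 1) * U - MvPolynomial.C (l θ) * V := by
  classical
  obtain ⟨w, hw⟩ := h
  obtain ⟨w', hw'⟩ := coeff_functional l w
  refine ⟨w', ?_⟩
  ext n
  have := congrArg (fun p => l (MvPolynomial.coeff n p)) hw
  simp only [MvPolynomial.coeff_sub, MvPolynomial.coeff_C_mul] at this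
  simp only [MvPolynomial.coeff_mul,
    MvPolynomial.coeff_map, map_sub, map_sum] at this
  rw [MvPolynomial.coeff_sub, MvPolynomial.coeff_C_mul, MvPolynomial.coeff_C_mul,
    MvPolynomial.coeff_mul]
  simp only [hw']
  have e1 : ∀ c : k, ∀ b : kb, l (algebraMap k kb c * b) = c * l b := fun c b => by
    rw [← Algebra.smul_def, map_smul, smul_eq_mul]
  have e2 : ∀ c : k, l (algebraMap k kb c) = c * l 1 := fun c => by
    rw [← e1, mul_one]
  simp only [e1] at this
  rw [e2, mul_comm θ, e1] at this
  rw [← this]; ring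

theorem alg_closed_of_abs_irred {σ k L : Type} [Field k] [Field L] [Algebra k L]
    (P : MvPolynomial σ k)
    (hP : Irreducible (MvPolynomial.map (algebraMap k (AlgebraicClosure k)) P))
    (φ : MvPolynomial σ k →ₐ[k] L) (hker : ∀ a, φ a = 0 ↔ P ∣ a)
    (hfrac : ∀ t : L, ∃ U V, φ V ≠ 0 ∧ t * φ V = φ U) (t : L) (ht : IsAlgebraic k t) :
    t ∈ (algebraMap k L).range := by
  classical
  obtain ⟨U, V, hV, hUV⟩ := hfrac t
  let kb := AlgebraicClosure k
  set Pb := MvPolynomial.map (algebraMap k kb) P with hPb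
  obtain ⟨p, hp0, hp⟩ := ht
  -- homogenization
  let N : MvPolynomial σ k := ∑ i ∈ Finset.range (p.natDegree + 1),
    MvPolynomial.C (p.coeff i) * U ^ i * V ^ (p.natDegree - i)
  have hN : ∀ (M : Type) [Field M] (χ : MvPolynomial σ k →+* M) (s : M),
      s * χ V = χ U → χ N = χ V ^ p.natDegree * eval₂ (χ.comp MvPolynomial.C) s p := by
    intro M _ χ s hs
    rw [eval₂_eq_sum_range, Finset.mul_sum, map_sum]
    refine Finset.sum_congr rfl fun i hi => ?_
    have hi' : i ≤ p.natDegree := by simpa [Nat.lt_succ_iff] using hi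
    rw [map_mul, map_mul, map_pow, map_pow, ← hs, RingHom.comp_apply]
    obtain ⟨j, hj⟩ := Nat.exists_eq_add_of_le hi'
    have : p.natDegree - i = j := by omega
    rw [this, hj]; ring
  have hPN : P ∣ N := by
    rw [← hker]
    have h1 := hN L φ.toRingHom t hUV
    have h2 : φ.toRingHom.comp MvPolynomial.C = algebraMap k L := by
      ext c; exact φ.commutes c
    rw [h2] at h1
    rw [aeval_def] at hp
    rw [hp, mul_zero] at h1
    exact h1
  have hprime : Prime Pb := hP.prime
  have : (Ideal.span {Pb}).IsPrime := (Ideal.span_singleton_prime hprime.ne_zero).2 hprime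
  let D := MvPolynomial σ kb ⧸ Ideal.span {Pb}
  let E := FractionRing D
  let χ' : MvPolynomial σ kb →+* E := (algebraMap D E).comp (Ideal.Quotient.mk (Ideal.span {Pb}))
  let χ : MvPolynomial σ k →+* E := χ'.comp (MvPolynomial.map (algebraMap k kb))
  have hχ' : ∀ a, χ' a = 0 ↔ Pb ∣ a := by
    intro a
    have h1 : χ' a = 0 ↔ Ideal.Quotient.mk (Ideal.span {Pb}) a = 0 :=
      map_eq_zero_iff (algebraMap D E) (IsFractionRing.injective D E)
    rw [h1, Ideal.Quotient.eq_zero_iff_mem, Ideal.mem_span_singleton]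
  have hχN : χ N = 0 := (hχ' _).2 (map_dvd _ hPN)
  obtain ⟨l, hl⟩ : ∃ l : kb →ₗ[k] k, l 1 = 1 := by
    obtain ⟨l, hl⟩ := (Algebra.linearMap k kb).exists_leftInverse_of_injective
      (LinearMap.ker_eq_bot.2 (algebraMap k kb).injective)
    refine ⟨l, ?_⟩
    have := LinearMap.congr_fun hl 1
    simpa using this
  have key : ∃ θ : kb, Pb ∣ MvPolynomial.map (algebraMap k kb) U -
      MvPolynomial.C θ * MvPolynomial.map (algebraMap k kb) V := by
    have hχV : χ V ≠ 0 := by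
      intro h0
      have h1 := (hχ' _).1 h0
      have h2 : Pb ∣ MvPolynomial.map (algebraMap k kb) V -
          MvPolynomial.C 0 * MvPolynomial.map (algebraMap k kb) V := by
        simpa using h1
      have h3 := dvd_functional l P V V 0 h2
      rw [hl, map_one, one_mul, map_zero, map_zero, zero_mul, sub_zero] at h3
      exact hV ((hker V).2 h3)
    have h1 := hN E χ (χ U / χ V) (div_mul_cancel₀ _ hχV)
    rw [hχN] at h1
    have h2 : eval₂ (χ.comp MvPolynomial.C) (χ U / χ V) p = 0 := by
      rcases mul_eq_zero.1 h1.symm with h | h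
      · exact absurd h (pow_ne_zero _ hχV)
      · exact h
    let _ : Algebra kb E := (χ'.comp MvPolynomial.C).toAlgebra
    have h3 : χ.comp MvPolynomial.C = (algebraMap kb E).comp (algebraMap k kb) := by
      ext c
      change χ' (MvPolynomial.map (algebraMap k kb) (MvPolynomial.C c)) =
        χ' (MvPolynomial.C (algebraMap k kb c))
      rw [MvPolynomial.map_C]
    rw [h3, ← eval₂_map] at h2
    have h4 : IsAlgebraic kb (χ U / χ V) :=
      ⟨p.map (algebraMap k kb), (Polynomial.map_ne_zero_iff (algebraMap k kb).injective).2 hp0, h2⟩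
    have h5 := minpoly.mem_range_of_degree_eq_one kb (χ U / χ V)
      (IsAlgClosed.degree_eq_one_of_irreducible kb (minpoly.irreducible h4.isIntegral))
    obtain ⟨θ, hθ⟩ := h5
    refine ⟨θ, (hχ' _).1 ?_⟩
    rw [map_sub, map_mul]
    change χ U - algebraMap kb E θ * χ V = 0
    rw [hθ, div_mul_cancel₀ _ hχV, sub_self]
  obtain ⟨θ, hθ⟩ := key
  by_cases hmem : θ ∈ Submodule.span k {(1 : kb)}
  · obtain ⟨c, hc⟩ := Submodule.mem_span_singleton.1 hmem
    have h3 := dvd_functional l P U V θ hθ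
    rw [← hc, map_smul, hl, map_one, one_mul, smul_eq_mul, mul_one, ← hker, map_sub, map_mul,
      ← hUV, ← sub_mul] at h3
    have h4 : t - φ (MvPolynomial.C c) = 0 := (mul_eq_zero.1 h3).resolve_right hV
    refine ⟨c, ?_⟩
    rw [sub_eq_zero.1 h4]
    exact (φ.commutes c).symm
  · exfalso
    obtain ⟨l, hl1, hl2⟩ := Submodule.exists_le_ker_of_notMem hmem
    have h1 : l 1 = 0 := hl2 (Submodule.mem_span_singleton_self _)
    have h3 := dvd_functional l P U V θ hθ
    rw [h1, map_zero, zero_mul, zero_sub, dvd_neg, ← hker, map_mul] at h3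
    rcases mul_eq_zero.1 h3 with h | h
    · have h5 : φ (MvPolynomial.C (l θ)) = algebraMap k L (l θ) := φ.commutes _
      rw [h5, map_eq_zero] at h
      exact hl1 h
    · exact hV h

section
variable {B K0 L : Type*} [CommRing B] [IsDomain B] [Field K0] [Field L]
  [Algebra B K0] [IsFractionRing B K0] [Algebra K0 L] [Algebra B L] [IsScalarTower B K0 L]
  (P : B[X]) (y0 : L)

theorem gauss_ker (hP : Prime P) (hdeg : P.natDegree ≠ 0)
    (hmk : ∀ p : K0[X], aeval y0 p = 0 ↔ P.map (algebraMap B K0) ∣ p) (a : B[X]) :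
    aeval y0 a = 0 ↔ P ∣ a := by
  have e : aeval y0 a = aeval y0 (a.map (algebraMap B K0)) := (aeval_map_algebraMap K0 y0 a).symm
  rw [e, hmk]
  refine ⟨?_, fun h => Polynomial.map_dvd _ h⟩
  rintro ⟨w, hw⟩
  obtain ⟨b, hb, hbw⟩ := IsLocalization.integerNormalization_spec (nonZeroDivisors B) w
  have h1 : C b * a = P * IsLocalization.integerNormalization (nonZeroDivisors B) w := by
    apply Polynomial.map_injective (algebraMap B K0) (IsFractionRing.injective B K0)
    rw [Polynomial.map_mul, Polynomial.map_mul, hbw, hw, map_C, Algebra.smul_def]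
    rw [IsScalarTower.algebraMap_apply B K0 K0[X]]
    change C _ * _ = _ * (C _ * _)
    ring
  rcases hP.dvd_or_dvd ⟨_, h1⟩ with h | h
  · exfalso
    have hb0 : C b ≠ 0 := C_ne_zero.2 (nonZeroDivisors.ne_zero hb)
    have := natDegree_le_of_dvd h hb0
    rw [natDegree_C] at this
    omega
  · exact h

theorem gauss_frac (hsurj : ∀ t : L, ∃ p : K0[X], aeval y0 p = t) (t : L) :
    ∃ (b : B) (u : B[X]), b ≠ 0 ∧ t * algebraMap B L b = aeval y0 u := by
  obtain ⟨p, rfl⟩ := hsurj t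
  obtain ⟨b, hb, hbw⟩ := IsLocalization.integerNormalization_spec (nonZeroDivisors B) p
  refine ⟨b, IsLocalization.integerNormalization (nonZeroDivisors B) p,
    nonZeroDivisors.ne_zero hb, ?_⟩
  rw [← aeval_map_algebraMap K0 y0 (IsLocalization.integerNormalization _ p), hbw, ← algebraMap_smul K0 b p, map_smul, Algebra.smul_def,
    ← IsScalarTower.algebraMap_apply, mul_comm]
end

theorem clear_denom {σ k A L : Type} [Field k] [CommRing A] [Algebra k A] [Field L] [Algebra k L]
    (i : A →ₐ[k] L) (c : A) (φ : MvPolynomial σ k →ₐ[k] L) (n : σ → ℕ) (α : σ → A)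
    (hα : ∀ j, i (α j) = i c ^ n j * φ (MvPolynomial.X j)) (a : MvPolynomial σ k) :
    ∃ (N : ℕ) (β : A), i β = i c ^ N * φ a ∧
      ∀ (F : Type) [Field F] [Algebra k F] (ψ : A →ₐ[k] F) (θ : MvPolynomial σ k →ₐ[k] F),
        (∀ j, ψ (α j) = ψ c ^ n j * θ (MvPolynomial.X j)) → ψ β = ψ c ^ N * θ a := by
  induction a using MvPolynomial.induction_on with
  | C r =>
    refine ⟨0, algebraMap k A r, ?_, ?_⟩
    · rw [pow_zero, one_mul, i.commutes]; exact (φ.commutes r).symm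
    · intro F _ _ ψ θ _
      rw [pow_zero, one_mul, ψ.commutes]; exact (θ.commutes r).symm
  | add p q hp hq =>
    obtain ⟨N1, β1, h1, h1'⟩ := hp
    obtain ⟨N2, β2, h2, h2'⟩ := hq
    refine ⟨N1 + N2, c ^ N2 * β1 + c ^ N1 * β2, ?_, ?_⟩
    · simp only [map_add, map_mul, map_pow, h1, h2]; ring
    · intro F _ _ ψ θ h
      simp only [map_add, map_mul, map_pow, h1' F ψ θ h, h2' F ψ θ h]; ring
  | mul_X p j hp =>
    obtain ⟨N1, β1, h1, h1'⟩ := hp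
    refine ⟨N1 + n j, β1 * α j, ?_, ?_⟩
    · simp only [map_mul, hα, h1]; ring
    · intro F _ _ ψ θ h
      simp only [map_mul, h1' F ψ θ h, h]; ring

theorem exists_equiv3 (k : Type) [Field k] : ∃ Φ : MvPolynomial (Fin 3) k ≃ₐ[k] k[X][X][X],
    Φ (MvPolynomial.X 0) = X ∧ Φ (MvPolynomial.X 1) = C X ∧ Φ (MvPolynomial.X 2) = C (C X) ∧
    ∀ p, (Φ p).natDegree = p.degreeOf 0 := by
  let Ψ : MvPolynomial (Fin 2) k ≃ₐ[k] k[X][X] := (MvPolynomial.finSuccEquiv k 1).trans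
    (mapAlgEquiv (MvPolynomial.uniqueAlgEquiv k (Fin 1)))
  have h0 : Ψ (MvPolynomial.X 0) = X := by
    simp [Ψ, MvPolynomial.finSuccEquiv_X_zero]
  have h1 : Ψ (MvPolynomial.X 1) = C X := by
    have := MvPolynomial.finSuccEquiv_X_succ (R := k) (n := 1) (j := 0)
    simp only [Fin.succ_zero_eq_one] at this
    simp [Ψ, this]
  refine ⟨(MvPolynomial.finSuccEquiv k 2).trans (mapAlgEquiv Ψ), ?_, ?_, ?_, ?_⟩
  · simp [MvPolynomial.finSuccEquiv_X_zero]
  · have := MvPolynomial.finSuccEquiv_X_succ (R := k) (n := 2) (j := 0)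
    simp only [Fin.succ_zero_eq_one] at this
    simp [this, h0]
  · have := MvPolynomial.finSuccEquiv_X_succ (R := k) (n := 2) (j := 1)
    simp only [Fin.succ_one_eq_two] at this
    simp [this, h1]
  · intro p
    rw [← MvPolynomial.natDegree_finSuccEquiv]
    simp only [AlgEquiv.trans_apply, coe_mapAlgEquiv]
    exact natDegree_map_eq_of_injective Ψ.injective _

theorem local_map {σ k : Type*} [Field k] {kb : Type*} [Field kb] [Algebra k kb]
    (P : MvPolynomial σ k) (h : Irreducible (MvPolynomial.map (algebraMap k kb) P)) :
    Irreducible P := by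
  have : IsLocalHom (MvPolynomial.map (σ := σ) (algebraMap k kb)) := by
    constructor
    intro a ha
    rw [MvPolynomial.isUnit_iff_totalDegree_of_isReduced] at ha ⊢
    refine ⟨?_, ?_⟩
    · have := ha.1
      rw [MvPolynomial.coeff_map, isUnit_iff_ne_zero, _root_.map_ne_zero] at this
      exact isUnit_iff_ne_zero.2 this
    · have e : (MvPolynomial.map (algebraMap k kb) a).totalDegree = a.totalDegree := by
        unfold MvPolynomial.totalDegree
        rw [MvPolynomial.support_map_of_injective _ (algebraMap k kb).injective]
      rw [← e]; exact ha.2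
  exact Irreducible.of_map h

theorem exists_var {σ k : Type*} [Field k] (P : MvPolynomial σ k) (h : Irreducible P) :
    ∃ i, P.degreeOf i ≠ 0 := by
  classical
  by_contra hno
  push Not at hno
  have h1 : P.totalDegree = 0 := by
    rw [MvPolynomial.totalDegree_eq_zero_iff]
    intro m hm i
    have := MvPolynomial.monomial_le_degreeOf i hm
    rw [hno i] at this
    omega
  rw [MvPolynomial.totalDegree_eq_zero_iff_eq_C] at h1
  by_cases h0 : MvPolynomial.coeff 0 P = 0
  · rw [h0, map_zero] at h1
    exact h.ne_zero h1
  · apply h.not_isUnit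
    rw [h1]
    exact (isUnit_iff_ne_zero.2 h0).map MvPolynomial.C

theorem LW_mid {k K0 L A : Type} [Field k] [Fintype k] [Field K0] [Field L] [Algebra k K0]
    [Algebra k L] [Algebra K0 L] [IsScalarTower k K0 L] [FiniteDimensional K0 L]
    [CommRing A] [IsDomain A] [Algebra k A] [Algebra k[X][X] A] [IsScalarTower k k[X][X] A]
    (pb : PowerBasis k[X][X] A) (P δ : MvPolynomial (Fin 3) k) (hδ : ¬ P ∣ δ)
    (φ : MvPolynomial (Fin 3) k →ₐ[k] L) (hker : ∀ a, φ a = 0 ↔ P ∣ a)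
    (hK : ∀ t : K0, (∀ r : ℕ, ∃ s : K0, s ^ (Fintype.card k ^ r) = t) →
      t ∈ (algebraMap k K0).range)
    (hL : ∀ t : L, IsAlgebraic k t → t ∈ (algebraMap k L).range)
    (i : A →ₐ[k] L) (hi : Function.Injective i) (cA : A) (hcA0 : cA ≠ 0) (α : Fin 3 → A)
    (e : Fin 3 → ℕ)
    (hα : ∀ j, i (α j) = i cA ^ e j * φ (MvPolynomial.X j)) :
    ∃ r0 : ℕ, ∀ r ≥ r0, ∀ (F : Type) [Field F] [Fintype F] [Algebra k F],
      Fintype.card F = Fintype.card k ^ r →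
      ∃ v : Fin 3 → F, MvPolynomial.aeval v P = 0 ∧ MvPolynomial.aeval v δ ≠ 0 := by
  obtain ⟨N1, β1, hβ1, hβ1'⟩ := clear_denom i cA φ _ α hα P
  obtain ⟨N2, β2, hβ2, hβ2'⟩ := clear_denom i cA φ _ α hα δ
  have hβ10 : β1 = 0 := by
    apply hi
    rw [hβ1, (hker P).2 dvd_rfl, mul_zero, map_zero]
  have hβ20 : β2 ≠ 0 := by
    intro h
    rw [h, map_zero] at hβ2
    rcases mul_eq_zero.1 hβ2.symm with h | h
    · have := eq_zero_of_pow_eq_zero h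
      exact hcA0 (hi (this.trans (map_zero i).symm))
    · exact hδ ((hker δ).1 h)
  have hNV : ∀ (n m : ℕ) (h s : Fin n × Fin n × Fin m → A), h ≠ 0 → LinearIndependent k s →
      ∃ r0 : ℕ, ∀ r ≥ r0, ∑ i, h i * s i ^ (Fintype.card k ^ r) ≠ 0 := by
    intro n m h s hh hs
    have hs' : LinearIndependent k (fun j => i (s j)) :=
      hs.map' i.toLinearMap (LinearMap.ker_eq_bot.2 hi)
    have hh' : (fun j => i (h j)) ≠ 0 := by
      intro h'
      apply hh
      funext j
      apply hi
      rw [Pi.zero_apply, map_zero]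
      exact congrFun h' j
    obtain ⟨r0, hr0⟩ := frob_nonvanish (K := K0) hK hL _ _ hh' hs'
    refine ⟨r0, fun r hr h0 => hr0 r hr ?_⟩
    have := congrArg i h0
    simpa using this
  obtain ⟨r0, hr0⟩ := core pb hNV (β2 * cA) (mul_ne_zero hβ20 hcA0)
  refine ⟨r0, fun r hr F _ _ _ hF => ?_⟩
  obtain ⟨ψ, hψ⟩ := hr0 r hr F hF
  rw [map_mul] at hψ
  have hψc : ψ cA ≠ 0 := right_ne_zero_of_mul hψ
  have hψβ : ψ β2 ≠ 0 := left_ne_zero_of_mul hψ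
  let v : Fin 3 → F := fun j => ψ (α j) / ψ cA ^ e j
  have hv : ∀ j, ψ (α j) = ψ cA ^ e j *
      (MvPolynomial.aeval v : MvPolynomial (Fin 3) k →ₐ[k] F) (MvPolynomial.X j) := by
    intro j
    rw [MvPolynomial.aeval_X]
    exact (mul_div_cancel₀ _ (pow_ne_zero _ hψc)).symm
  refine ⟨v, ?_, ?_⟩
  · have h := hβ1' F ψ (MvPolynomial.aeval v) hv
    rw [hβ10, map_zero] at h
    exact (mul_eq_zero.1 h.symm).resolve_left (pow_ne_zero _ hψc)
  · have h := hβ2' F ψ (MvPolynomial.aeval v) hv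
    rw [h] at hψβ
    exact right_ne_zero_of_mul hψβ

theorem LW_aux {k K0 L : Type} [Field k] [Fintype k] [Field K0] [Field L] [Algebra k K0]
    [Algebra k L] [Algebra k[X][X] K0] [IsFractionRing k[X][X] K0] [Algebra K0 L]
    [Algebra k[X][X] L] [IsScalarTower k[X][X] K0 L] [IsScalarTower k k[X][X] K0]
    [IsScalarTower k k[X][X] L] [IsScalarTower k K0 L] [FiniteDimensional K0 L]
    (P δ : MvPolynomial (Fin 3) k)
    (hP : Irreducible (MvPolynomial.map (algebraMap k (AlgebraicClosure k)) P)) (hδ : ¬ P ∣ δ)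
    (hdeg : P.degreeOf 0 ≠ 0) (Φ : MvPolynomial (Fin 3) k ≃ₐ[k] k[X][X][X])
    (h0 : Φ (MvPolynomial.X 0) = X) (h1 : Φ (MvPolynomial.X 1) = C X)
    (h2 : Φ (MvPolynomial.X 2) = C (C X)) (hd : ∀ p, (Φ p).natDegree = p.degreeOf 0)
    (y0 : L) (hmk : ∀ p : K0[X], aeval y0 p = 0 ↔ (Φ P).map (algebraMap k[X][X] K0) ∣ p)
    (hsurj : ∀ t : L, ∃ p : K0[X], aeval y0 p = t) :
    ∃ r0 : ℕ, ∀ r ≥ r0, ∀ (F : Type) [Field F] [Fintype F] [Algebra k F],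
      Fintype.card F = Fintype.card k ^ r →
      ∃ v : Fin 3 → F, MvPolynomial.aeval v P = 0 ∧ MvPolynomial.aeval v δ ≠ 0 := by
  have hPirr : Irreducible P := local_map P hP
  have hP' : Prime (Φ P) := ((MulEquiv.irreducible_iff Φ).2 hPirr).prime
  have hdeg' : (Φ P).natDegree ≠ 0 := by rw [hd]; exact hdeg
  have hinjBL : Function.Injective (algebraMap k[X][X] L) := by
    rw [IsScalarTower.algebraMap_eq k[X][X] K0 L]
    exact (algebraMap K0 L).injective.comp (IsFractionRing.injective k[X][X] K0)
  let φ : MvPolynomial (Fin 3) k →ₐ[k] L :=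
    ((aeval y0 : k[X][X][X] →ₐ[k[X][X]] L).restrictScalars k).comp Φ.toAlgHom
  have hφ : ∀ a, φ a = aeval y0 (Φ a) := fun a => rfl
  have hker : ∀ a, φ a = 0 ↔ P ∣ a := by
    intro a
    rw [hφ, gauss_ker (K0 := K0) (Φ P) y0 hP' hdeg' hmk, map_dvd_iff]
  have hfrac : ∀ t : L, ∃ U V, φ V ≠ 0 ∧ t * φ V = φ U := by
    intro t
    obtain ⟨b, u, hb, hbu⟩ := gauss_frac (B := k[X][X]) y0 hsurj t
    refine ⟨Φ.symm u, Φ.symm (C b), ?_, ?_⟩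
    · rw [hφ, AlgEquiv.apply_symm_apply, aeval_C]
      exact fun h => hb (hinjBL (h.trans (map_zero _).symm))
    · rw [hφ, hφ, AlgEquiv.apply_symm_apply, aeval_C, AlgEquiv.apply_symm_apply, hbu]
  have hL := alg_closed_of_abs_irred P hP φ hker hfrac
  have hK : ∀ t : K0, (∀ r : ℕ, ∃ s : K0, s ^ (Fintype.card k ^ r) = t) →
      t ∈ (algebraMap k K0).range := by
    intro t ht
    by_cases ht0 : t = 0
    · exact ⟨0, by rw [ht0, map_zero]⟩
    obtain ⟨u, v, huv⟩ := ufd_perfect_part (B := k[X][X]) _ Fintype.one_lt_card t ht0 ht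
    have hunit : ∀ u : k[X][X]ˣ, ∃ c : k, (u : k[X][X]) = algebraMap k k[X][X] c := by
      intro u
      obtain ⟨p, hp, hpu⟩ := Polynomial.isUnit_iff.1 u.isUnit
      obtain ⟨c, hc, hcp⟩ := Polynomial.isUnit_iff.1 hp
      exact ⟨c, by rw [← hpu, ← hcp]; rfl⟩
    obtain ⟨c, hc⟩ := hunit u
    obtain ⟨c', hc'⟩ := hunit v
    refine ⟨c / c', ?_⟩
    rw [huv, hc, hc', map_div₀, ← IsScalarTower.algebraMap_apply, ← IsScalarTower.algebraMap_apply]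
  have : Module.IsTorsionFree k[X][X] L := by
    have : FaithfulSMul k[X][X] L := (faithfulSMul_iff_algebraMap_injective k[X][X] L).2 hinjBL
    infer_instance
  set c := (Φ P).leadingCoeff with hc
  have hc0 : c ≠ 0 := leadingCoeff_ne_zero.2 hP'.ne_zero
  have hint : IsIntegral k[X][X] (c • y0) := isIntegral_leadingCoeff_smul (Φ P) y0 ((hker P).2 dvd_rfl)
  let A := Algebra.adjoin k[X][X] {c • y0}
  let pb : PowerBasis k[X][X] A := Algebra.adjoin.powerBasis' hint
  let i : A →ₐ[k] L := A.val.restrictScalars k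
  have hi : Function.Injective i := Subtype.val_injective
  let yt : A := ⟨c • y0, Algebra.subset_adjoin rfl⟩
  let cA : A := algebraMap k[X][X] A c
  have hcA : i cA = algebraMap k[X][X] L c := rfl
  have hcA0 : cA ≠ 0 := by
    intro h
    apply hc0
    apply hinjBL
    rw [← hcA, h, map_zero, map_zero]
  let α : Fin 3 → A := ![yt, algebraMap k[X][X] A X, algebraMap k[X][X] A (C X)]
  have hα : ∀ j, i (α j) = i cA ^ (![1, 0, 0] : Fin 3 → ℕ) j * φ (MvPolynomial.X j) := by
    intro j
    fin_cases j
    · change c • y0 = i cA ^ 1 * φ (MvPolynomial.X 0)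
      rw [pow_one, hcA, hφ, h0, aeval_X, Algebra.smul_def]
    · change algebraMap k[X][X] L X = i cA ^ 0 * φ (MvPolynomial.X 1)
      rw [pow_zero, one_mul, hφ, h1, aeval_C]
    · change algebraMap k[X][X] L (C X) = i cA ^ 0 * φ (MvPolynomial.X 2)
      rw [pow_zero, one_mul, hφ, h2, aeval_C]
  exact LW_mid pb P δ hδ φ hker hK hL i hi cA hcA0 α _ hα

theorem LW0 {k : Type} [Field k] [Fintype k] (P δ : MvPolynomial (Fin 3) k)
    (hP : Irreducible (MvPolynomial.map (algebraMap k (AlgebraicClosure k)) P)) (hδ : ¬ P ∣ δ)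
    (hdeg : P.degreeOf 0 ≠ 0) :
    ∃ r0 : ℕ, ∀ r ≥ r0, ∀ (F : Type) [Field F] [Fintype F] [Algebra k F],
      Fintype.card F = Fintype.card k ^ r →
      ∃ v : Fin 3 → F, MvPolynomial.aeval v P = 0 ∧ MvPolynomial.aeval v δ ≠ 0 := by
  obtain ⟨Φ, h0, h1, h2, hd⟩ := exists_equiv3 k
  have hPirr : Irreducible P := local_map P hP
  have hP' : Irreducible (Φ P) := (MulEquiv.irreducible_iff Φ).2 hPirr
  have hprim := hP'.isPrimitive (by rw [hd]; exact hdeg)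
  have hirr : Irreducible ((Φ P).map (algebraMap k[X][X] (FractionRing k[X][X]))) :=
    hprim.irreducible_iff_irreducible_map_fraction_map.1 hP'
  have : Fact (Irreducible ((Φ P).map (algebraMap k[X][X] (FractionRing k[X][X])))) := ⟨hirr⟩
  have : FiniteDimensional (FractionRing k[X][X])
      (AdjoinRoot ((Φ P).map (algebraMap k[X][X] (FractionRing k[X][X])))) :=
    (AdjoinRoot.powerBasis hirr.ne_zero).finite
  refine LW_aux (K0 := FractionRing k[X][X])
    (L := AdjoinRoot ((Φ P).map (algebraMap k[X][X] (FractionRing k[X][X]))))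
    P δ hP hδ hdeg Φ h0 h1 h2 hd (AdjoinRoot.root _) ?_ ?_
  · intro p
    rw [AdjoinRoot.aeval_eq, AdjoinRoot.mk_eq_zero]
  · intro t
    obtain ⟨p, hp⟩ := AdjoinRoot.mk_surjective t
    exact ⟨p, by rw [AdjoinRoot.aeval_eq, hp]⟩

theorem LW {k : Type} [Field k] [Fintype k] (P δ : MvPolynomial (Fin 3) k)
    (hP : Irreducible (MvPolynomial.map (algebraMap k (AlgebraicClosure k)) P)) (hδ : ¬ P ∣ δ) :
    ∃ r0 : ℕ, ∀ r ≥ r0, ∀ (F : Type) [Field F] [Fintype F] [Algebra k F],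
      Fintype.card F = Fintype.card k ^ r →
      ∃ v : Fin 3 → F, MvPolynomial.aeval v P = 0 ∧ MvPolynomial.aeval v δ ≠ 0 := by
  obtain ⟨j, hj⟩ := exists_var P (local_map P hP)
  let e : Fin 3 ≃ Fin 3 := Equiv.swap j 0
  have he : e j = 0 := Equiv.swap_apply_left j 0
  let E := MvPolynomial.renameEquiv k e
  have hE : ∀ p, E p = MvPolynomial.rename e p := fun p => rfl
  obtain ⟨r0, hr0⟩ := LW0 (E P) (E δ) (by
    rw [hE, MvPolynomial.map_rename]
    exact (MulEquiv.irreducible_iff (MvPolynomial.renameEquiv (AlgebraicClosure k) e)).2 hP)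
    (by rw [map_dvd_iff]; exact hδ)
    (by rw [hE, ← he, MvPolynomial.degreeOf_rename_of_injective e.injective]; exact hj)
  refine ⟨r0, fun r hr F _ _ _ hF => ?_⟩
  obtain ⟨v, h1, h2⟩ := hr0 r hr F hF
  rw [hE, MvPolynomial.aeval_rename] at h1 h2
  exact ⟨_, h1, h2⟩

theorem coeff11_aeval {K : Type*} [Field K] (f : K[X]) (a : K[X][X])
    (ha : ∀ n : ℕ, ((a ^ n).coeff 1).coeff 1 = 0) : ((aeval a f).coeff 1).coeff 1 = 0 := by
  induction f using Polynomial.induction_on' with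
  | add p q hp hq => rw [map_add, coeff_add, coeff_add, hp, hq, add_zero]
  | monomial n c =>
    rw [aeval_monomial]
    have : algebraMap K K[X][X] c = C (C c) := rfl
    rw [this, coeff_C_mul, coeff_C_mul, ha, mul_zero]

theorem no_sq_dvd {K : Type*} [Field K] [CharP K 2] (f : K[X]) (W : K[X][X])
    (h : X * X * W = aeval (C X : K[X][X]) f + aeval (C X + X : K[X][X]) f +
      aeval (0 : K[X][X]) f + aeval (X : K[X][X]) f + X * C X) : False := by
  have h1 : ((aeval (C X : K[X][X]) f).coeff 1).coeff 1 = 0 := by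
    apply coeff11_aeval
    intro n
    rw [← C_pow, coeff_C]; simp
  have h2 : ((aeval (C X + X : K[X][X]) f).coeff 1).coeff 1 = 0 := by
    apply coeff11_aeval
    intro n
    rw [add_comm, coeff_X_add_C_pow]
    rw [Nat.choose_one_right, ← C_eq_natCast, coeff_mul_C, coeff_X_pow]
    split_ifs with hn
    · have : n = 2 := by omega
      subst this
      rw [one_mul]
      exact_mod_cast CharP.cast_eq_zero K 2
    · simp
  have h3 : ((aeval (0 : K[X][X]) f).coeff 1).coeff 1 = 0 := by
    apply coeff11_aeval
    intro n
    cases n with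
    | zero => simp [coeff_one]
    | succ n => simp
  have h4 : ((aeval (X : K[X][X]) f).coeff 1).coeff 1 = 0 := by
    apply coeff11_aeval
    intro n
    rw [coeff_X_pow]
    split_ifs <;> simp [coeff_one]
  have h5 := congrArg (fun p : K[X][X] => (p.coeff 1).coeff 1) h
  simp only [coeff_add, h1, h2, h3, h4, mul_assoc, coeff_X_mul, coeff_X_mul_zero] at h5
  simp at h5

theorem not_dvd_lin {K : Type} [Field K] [CharP K 2] (f : K[X]) (P H : MvPolynomial (Fin 3) K)
    (hP : Irreducible P) (hPH : P ∣ H)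
    (hH : (MvPolynomial.X 0 + MvPolynomial.X 1) * (MvPolynomial.X 0 + MvPolynomial.X 2) * H =
      Polynomial.aeval (MvPolynomial.X 0) f + Polynomial.aeval (MvPolynomial.X 1) f +
        Polynomial.aeval (MvPolynomial.X 2) f +
        Polynomial.aeval (MvPolynomial.X 0 + MvPolynomial.X 1 + MvPolynomial.X 2) f +
        (MvPolynomial.X 0 + MvPolynomial.X 1) * (MvPolynomial.X 0 + MvPolynomial.X 2))
    (j : Fin 3) (hj : j = 1 ∨ j = 2) : ¬ P ∣ MvPolynomial.X 0 + MvPolynomial.X j := by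
  have h2 : (2 : K[X][X]) = 0 := by
    have := CharP.cast_eq_zero K[X][X] 2
    exact_mod_cast this
  rintro ⟨u, hu⟩
  have hj0 : j ≠ 0 := by rcases hj with rfl | rfl <;> decide
  have hlin0 : (MvPolynomial.X 0 + MvPolynomial.X j : MvPolynomial (Fin 3) K) ≠ 0 := by
    intro h0
    have := congrArg (MvPolynomial.eval (Pi.single 0 1 : Fin 3 → K)) h0
    simp [hj0] at this
  have hP0 := hP.ne_zero
  have hu0 : u ≠ 0 := by rintro rfl; rw [mul_zero] at hu; exact hlin0 hu
  have hdeg : P.totalDegree + u.totalDegree ≤ 1 := by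
    rw [← MvPolynomial.totalDegree_mul_of_isDomain hP0 hu0, ← hu]
    refine (MvPolynomial.totalDegree_add _ _).trans ?_
    simp
  have hPd : P.totalDegree ≠ 0 := by
    intro h0
    rw [MvPolynomial.totalDegree_eq_zero_iff_eq_C] at h0
    apply hP.not_isUnit
    rw [h0]
    refine (isUnit_iff_ne_zero.2 ?_).map MvPolynomial.C
    intro h1
    rw [h1, map_zero] at h0
    exact hP0 h0
  have hud : u.totalDegree = 0 := by omega
  rw [MvPolynomial.totalDegree_eq_zero_iff_eq_C] at hud
  have huu : IsUnit u := by
    rw [hud]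
    refine (isUnit_iff_ne_zero.2 ?_).map MvPolynomial.C
    intro h1
    rw [h1, map_zero] at hud
    exact hu0 hud
  have hdvd : MvPolynomial.X 0 + MvPolynomial.X j ∣ H := by
    rw [hu]
    exact (huu.mul_right_dvd).2 hPH
  obtain ⟨W, rfl⟩ := hdvd
  have hXX : (C X + (C X + X) : K[X][X]) = X := by linear_combination (C X) * h2
  rcases hj with rfl | rfl
  · let s : MvPolynomial (Fin 3) K →ₐ[K] K[X][X] := MvPolynomial.aeval ![C X, C X + X, 0]
    have e0 : s (MvPolynomial.X 0) = C X := by simp [s]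
    have e1 : s (MvPolynomial.X 1) = C X + X := by simp [s]
    have e2 : s (MvPolynomial.X 2) = 0 := by simp [s]
    have := congrArg s hH
    simp only [map_mul, map_add, ← aeval_algHom_apply, e0, e1, e2, add_zero, hXX] at this
    refine no_sq_dvd f (C X * s W) ?_
    linear_combination this
  · let s : MvPolynomial (Fin 3) K →ₐ[K] K[X][X] := MvPolynomial.aeval ![C X, 0, C X + X]
    have e0 : s (MvPolynomial.X 0) = C X := by simp [s]
    have e1 : s (MvPolynomial.X 1) = 0 := by simp [s]
    have e2 : s (MvPolynomial.X 2) = C X + X := by simp [s]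
    have := congrArg s hH
    simp only [map_mul, map_add, ← aeval_algHom_apply, e0, e1, e2, add_zero, hXX] at this
    refine no_sq_dvd f (C X * s W) ?_
    linear_combination this

theorem not_exceptional_planar_even_of_abs_irreducible_factor
    (m : ℕ) (hm : 0 < m)
    (K : Type) [Field K] [Fintype K] (hK : Fintype.card K = 2 ^ m)
    (f : K[X]) (H : MvPolynomial (Fin 3) K)
    (hH : (MvPolynomial.X 0 + MvPolynomial.X 1) * (MvPolynomial.X 0 + MvPolynomial.X 2) * H =
      Polynomial.aeval (MvPolynomial.X 0) f + Polynomial.aeval (MvPolynomial.X 1) f +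
        Polynomial.aeval (MvPolynomial.X 2) f +
        Polynomial.aeval (MvPolynomial.X 0 + MvPolynomial.X 1 + MvPolynomial.X 2) f +
        (MvPolynomial.X 0 + MvPolynomial.X 1) * (MvPolynomial.X 0 + MvPolynomial.X 2))
    (hirr : ∃ g : MvPolynomial (Fin 3) K, g ∣ H ∧
      Irreducible (MvPolynomial.map (algebraMap K (AlgebraicClosure K)) g)) :
    ¬ IsExceptionalPlanarEven f := by
  intro hex
  have : Fact (Nat.Prime 2) := ⟨Nat.prime_two⟩
  have : CharP K 2 := charP_of_card_eq_prime_pow hK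
  obtain ⟨P, hPH, hP⟩ := hirr
  have hPirr : Irreducible P := local_map P hP
  have hδ : ¬ P ∣ (MvPolynomial.X 0 + MvPolynomial.X 1) *
      (MvPolynomial.X 0 + MvPolynomial.X 2) := by
    intro hd
    rcases hPirr.prime.dvd_or_dvd hd with h | h
    · exact not_dvd_lin f P H hPirr hPH hH 1 (Or.inl rfl) h
    · exact not_dvd_lin f P H hPirr hPH hH 2 (Or.inr rfl) h
  obtain ⟨r0, hr0⟩ := LW P _ hP hδ
  obtain ⟨r, ⟨hrpos, hr⟩, hrr⟩ := hex.exists_gt r0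
  have : NeZero r := ⟨hrpos.ne'⟩
  let F := FiniteField.Extension K 2 r
  let _ : Fintype F := Fintype.ofFinite F
  have hF : Fintype.card F = Fintype.card K ^ r := by
    rw [Fintype.card_eq_nat_card, Fintype.card_eq_nat_card]
    exact FiniteField.natCard_extension K 2 r
  obtain ⟨v, hv1, hv2⟩ := hr0 r hrr.le F hF
  have hpl := hr F hF
  have hH0 : MvPolynomial.aeval v H = 0 := by
    obtain ⟨W, rfl⟩ := hPH
    rw [map_mul, hv1, zero_mul]
  have : CharP F 2 := charP_of_injective_algebraMap (algebraMap K F).injective 2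
  have htwo : (2 : F) = 0 := by
    have := CharP.cast_eq_zero F 2
    exact_mod_cast this
  have hE := congrArg (MvPolynomial.aeval v) hH
  simp only [map_mul, map_add, ← aeval_algHom_apply, MvPolynomial.aeval_X, hH0, mul_zero] at hE hv2
  have hxy : v 0 + v 1 ≠ 0 := left_ne_zero_of_mul hv2
  have hxz : v 0 + v 2 ≠ 0 := right_ne_zero_of_mul hv2
  have hinj := (hpl (v 0 + v 2) hxz).1
  have a1 : v 0 + (v 0 + v 2) = v 2 := by linear_combination (v 0) * htwo
  have a2 : v 1 + (v 0 + v 2) = v 0 + v 1 + v 2 := by ring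
  have h01 : v 0 = v 1 := by
    apply hinj
    simp only [a1, a2]
    linear_combination (-1 : F) * hE -
      (aeval (v 0 + v 1 + v 2) f + aeval (v 1) f + (v 0 + v 2) * v 1) * htwo
  apply hxy
  rw [h01]
  linear_combination (v 1) * htwo
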